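/- arXiv:1810.06039 — 4 statements merged into one kernel-verified Lean document; each statement's English description precedes it below -/
import Mathlib

section
/- Quasi-minimality of mean values for powers: Let p ≥ 1 and α ≥ 1/p. Then there exists a constant c = c(α,p) such that whenever A ⊆ B ⊂ ℝ^k, k ∈ ℕ, are two bounded domains of positive Lebesgue measure, then for any function u ∈ L^{αp}(B;ℝ^N) and any constant a ∈ ℝ^N one has ⨍_B |u^⟨α⟩ − ((u)_A)^⟨α⟩|^p dx ≤ (c|B|/|A|) ⨍_B |u^⟨α⟩ − a^⟨α⟩|^p dx. -/
open MeasureTheory Set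
open scoped ENNReal

noncomputable section

abbrev Vec (N : ℕ) := EuclideanSpace ℝ (Fin N)

/-- The power `w^⟨α⟩ := |w|^{α−1} w` of a vector (interpreted as `0` when `w = 0`). -/
def pw {N : ℕ} (α : ℝ) (w : Vec N) : Vec N := ‖w‖ ^ (α - 1) • w

lemma norm_pw {N : ℕ} {α : ℝ} (hα : 0 < α) (w : Vec N) : ‖pw α w‖ = ‖w‖ ^ α := by
  rcases eq_or_ne w 0 with rfl | hw
  · simp [pw, Real.zero_rpow hα.ne']
  · have hw' : 0 < ‖w‖ := norm_pos_iff.2 hw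
    rw [pw, norm_smul, Real.norm_of_nonneg (by positivity), Real.rpow_sub_one hw'.ne']
    field_simp

lemma pw_inv_pw {N : ℕ} {α : ℝ} (hα : 0 < α) (w : Vec N) : pw α⁻¹ (pw α w) = w := by
  rcases eq_or_ne w 0 with rfl | hw
  · simp [pw]
  · have hw' : 0 < ‖w‖ := norm_pos_iff.2 hw
    rw [pw, norm_pw hα, pw, smul_smul, ← Real.rpow_mul hw'.le, ← Real.rpow_add hw']
    have : α * (α⁻¹ - 1) + (α - 1) = 0 := by field_simp; ring
    simp [this]

lemma measurable_pw {N : ℕ} (α : ℝ) : Measurable (pw α : Vec N → Vec N) :=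
  (measurable_norm.pow_const _).smul measurable_id

lemma one_sub_rpow_le {α s : ℝ} (hα : 0 < α) (hs : 0 ≤ s) (hs1 : s ≤ 1) :
    1 - s ^ α ≤ (1 + α) * (1 - s) := by
  rcases le_total 1 α with h | h
  · have := one_add_mul_self_le_rpow_one_add (s := s - 1) (by linarith) h
    rw [add_sub_cancel] at this
    nlinarith
  · have := Real.rpow_le_rpow_of_exponent_ge' hs hs1 hα.le h
    rw [Real.rpow_one] at this
    nlinarith

lemma abs_rpow_sub_mul_le {α r s : ℝ} (hα : 0 < α) (hs : 0 ≤ s) (hsr : s ≤ r) :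
    |r ^ (α - 1) - s ^ (α - 1)| * s ≤ (2 + α) * r ^ (α - 1) * (r - s) := by
  rcases hs.eq_or_lt with rfl | hs
  · have := Real.rpow_nonneg hsr (α - 1)
    simp only [mul_zero, sub_zero]
    positivity
  have hr : 0 < r := hs.trans_le hsr
  set q := s / r with hq
  have hq0 : 0 < q := by positivity
  have hq1 : q ≤ 1 := (div_le_one hr).2 hsr
  have hsq : s = r * q := by rw [hq]; field_simp
  have hqα : q ^ (α - 1) * q = q ^ α := by rw [Real.rpow_sub_one hq0.ne']; field_simp
  have hqα1 : q ^ α ≤ 1 := Real.rpow_le_one hq0.le hq1 hα.le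
  have hb := one_sub_rpow_le hα hq0.le hq1
  have key : |1 - q ^ (α - 1)| * q ≤ (2 + α) * (1 - q) := by
    rw [← abs_of_pos hq0, ← abs_mul, abs_of_pos hq0, sub_mul, hqα, one_mul, abs_le]
    constructor <;> nlinarith
  have hrα : 0 < r ^ (α - 1) := by positivity
  have h1 : r ^ (α - 1) - s ^ (α - 1) = r ^ (α - 1) * (1 - q ^ (α - 1)) := by
    rw [hsq, Real.mul_rpow hr.le hq0.le]; ring
  rw [h1, abs_mul, abs_of_pos hrα]
  calc r ^ (α - 1) * |1 - q ^ (α - 1)| * s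
      = r ^ (α - 1) * r * (|1 - q ^ (α - 1)| * q) := by rw [hsq]; ring
    _ ≤ r ^ (α - 1) * r * ((2 + α) * (1 - q)) := by gcongr
    _ = (2 + α) * r ^ (α - 1) * (r - s) := by rw [hsq]; ring

lemma norm_pw_sub_pw_le {N : ℕ} {α : ℝ} (hα : 0 < α) (x y : Vec N) :
    ‖pw α x - pw α y‖ ≤ (3 + α) * (max ‖x‖ ‖y‖) ^ (α - 1) * ‖x - y‖ := by
  wlog h : ‖y‖ ≤ ‖x‖ generalizing x y
  · rw [norm_sub_rev, norm_sub_rev x, max_comm]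
    exact this y x (le_of_not_ge h)
  rw [max_eq_left h]
  have hsplit : pw α x - pw α y
      = ‖x‖ ^ (α - 1) • (x - y) + (‖x‖ ^ (α - 1) - ‖y‖ ^ (α - 1)) • y := by
    simp only [pw]; module
  have hx : 0 ≤ ‖x‖ ^ (α - 1) := by positivity
  calc ‖pw α x - pw α y‖
      ≤ ‖x‖ ^ (α - 1) * ‖x - y‖ + |‖x‖ ^ (α - 1) - ‖y‖ ^ (α - 1)| * ‖y‖ := by
        rw [hsplit]
        refine (norm_add_le _ _).trans_eq ?_
        rw [norm_smul, norm_smul, Real.norm_of_nonneg hx, Real.norm_eq_abs]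
    _ ≤ ‖x‖ ^ (α - 1) * ‖x - y‖ + (2 + α) * ‖x‖ ^ (α - 1) * (‖x‖ - ‖y‖) := by
        refine add_le_add le_rfl ?_
        exact abs_rpow_sub_mul_le hα (norm_nonneg y) h
    _ ≤ ‖x‖ ^ (α - 1) * ‖x - y‖ + (2 + α) * ‖x‖ ^ (α - 1) * ‖x - y‖ := by
        gcongr
        exact norm_sub_norm_le x y
    _ = (3 + α) * ‖x‖ ^ (α - 1) * ‖x - y‖ := by ring

lemma le_norm_pw_sub_pw {N : ℕ} {α : ℝ} (hα : 0 < α) (x y : Vec N) :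
    (max ‖x‖ ‖y‖) ^ (α - 1) * ‖x - y‖ ≤ (3 + α⁻¹) * ‖pw α x - pw α y‖ := by
  have h := norm_pw_sub_pw_le (inv_pos.2 hα) (pw α x) (pw α y)
  rw [pw_inv_pw hα, pw_inv_pw hα, norm_pw hα, norm_pw hα] at h
  have hmax : max (‖x‖ ^ α) (‖y‖ ^ α) = max ‖x‖ ‖y‖ ^ α := by
    rcases le_total ‖x‖ ‖y‖ with hxy | hxy
    · rw [max_eq_right hxy, max_eq_right (by gcongr)]
    · rw [max_eq_left hxy, max_eq_left (by gcongr)]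
  rw [hmax] at h
  rcases (le_max_of_le_left (norm_nonneg x) : 0 ≤ max ‖x‖ ‖y‖).eq_or_lt with h0 | hm
  · have hx : x = 0 := norm_le_zero_iff.1 ((le_max_left _ _).trans h0.ge)
    have hy : y = 0 := norm_le_zero_iff.1 ((le_max_right _ _).trans h0.ge)
    simp [hx, hy]
  set m := max ‖x‖ ‖y‖
  have hcancel : m ^ (α - 1) * (m ^ α) ^ (α⁻¹ - 1) = 1 := by
    rw [← Real.rpow_mul hm.le, ← Real.rpow_add hm]
    have : α - 1 + α * (α⁻¹ - 1) = 0 := by field_simp; ring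
    simp [this]
  calc m ^ (α - 1) * ‖x - y‖
      ≤ m ^ (α - 1) * ((3 + α⁻¹) * (m ^ α) ^ (α⁻¹ - 1) * ‖pw α x - pw α y‖) := by gcongr
    _ = (m ^ (α - 1) * (m ^ α) ^ (α⁻¹ - 1)) * ((3 + α⁻¹) * ‖pw α x - pw α y‖) := by ring
    _ = _ := by rw [hcancel, one_mul]

lemma rpow_sub_one_mul_rpow {α p m t : ℝ} (hm : 0 < m) (ht : 0 < t) :
    (m ^ (α - 1) * t) ^ p = t * (t / m) ^ (p - 1) * m ^ (α * p - 1) := by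
  rw [Real.mul_rpow (by positivity) ht.le, Real.div_rpow ht.le hm.le, ← Real.rpow_mul hm.le,
    Real.rpow_sub_one ht.ne', show (α - 1) * p = (α * p - 1) - (p - 1) by ring,
    Real.rpow_sub hm]
  field_simp

/-- The almost-monotonicity of `t ↦ Φ(t)^p / t`, where `Φ(|x - a|) ∼ |x^⟨α⟩ - a^⟨α⟩|`. -/
lemma norm_pw_sub_rpow_mul_le {p α : ℝ} (hp : 1 ≤ p) (hα : 0 < α) (hαp : 1 ≤ α * p) {N : ℕ}
    {a b x : Vec N} (hb : 0 < ‖b - a‖) (hx : ‖b - a‖ ≤ 2 * ‖x - a‖) :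
    ‖pw α b - pw α a‖ ^ p * ‖x - a‖ ≤
      (3 + α) ^ p * 4 ^ (p - 1) * 5 ^ (α * p - 1) * (3 + α⁻¹) ^ p *
        ‖b - a‖ * ‖pw α x - pw α a‖ ^ p := by
  have hup := norm_pw_sub_pw_le hα b a
  have hlo := le_norm_pw_sub_pw hα x a
  set S := ‖b - a‖
  set t := ‖x - a‖
  have ht : 0 < t := by linarith
  have hbS : S ≤ ‖b‖ + ‖a‖ := norm_sub_le b a
  have hxt : t ≤ ‖x‖ + ‖a‖ := norm_sub_le x a
  have hbS' : ‖b‖ ≤ S + ‖a‖ := by simpa using norm_add_le (b - a) a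
  have hxt' : ‖x‖ ≤ t + ‖a‖ := by simpa using norm_add_le (x - a) a
  have hb1 := le_max_left ‖b‖ ‖a‖
  have hb2 := le_max_right ‖b‖ ‖a‖
  have hx1 := le_max_left ‖x‖ ‖a‖
  have hx2 := le_max_right ‖x‖ ‖a‖
  have hmb' : max ‖b‖ ‖a‖ ≤ S + ‖a‖ := max_le hbS' (by linarith)
  have hmx' : max ‖x‖ ‖a‖ ≤ t + ‖a‖ := max_le hxt' (by linarith)
  set mb := max ‖b‖ ‖a‖
  set mx := max ‖x‖ ‖a‖
  have hmb : 0 < mb := by linarith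
  have hmx : 0 < mx := by linarith
  have hm : mb ≤ 5 * mx := by linarith
  have hratio : S / mb ≤ 4 * (t / mx) := by
    rw [← mul_div_assoc, div_le_div_iff₀ hmb hmx]
    have h1 : S * mx ≤ S * (t + ‖a‖) := by gcongr
    have h2 : S * t ≤ (2 * mb) * t := by gcongr; linarith
    have h3 : S * ‖a‖ ≤ (2 * t) * mb := by gcongr
    linarith
  have hα1 : 0 ≤ α * p - 1 := by linarith
  have hp1 : 0 ≤ p - 1 := by linarith
  calc ‖pw α b - pw α a‖ ^ p * t
      ≤ ((3 + α) * mb ^ (α - 1) * S) ^ p * t := by gcongr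
    _ = (3 + α) ^ p * (S * (S / mb) ^ (p - 1) * mb ^ (α * p - 1)) * t := by
        rw [mul_assoc, Real.mul_rpow (by positivity) (by positivity),
          rpow_sub_one_mul_rpow hmb hb]
    _ ≤ (3 + α) ^ p * (S * (4 * (t / mx)) ^ (p - 1) * (5 * mx) ^ (α * p - 1)) * t := by gcongr
    _ = (3 + α) ^ p * 4 ^ (p - 1) * 5 ^ (α * p - 1) * S *
          (t * (t / mx) ^ (p - 1) * mx ^ (α * p - 1)) := by
        rw [Real.mul_rpow (by norm_num) (by positivity), Real.mul_rpow (by norm_num) hmx.le]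
        ring
    _ = (3 + α) ^ p * 4 ^ (p - 1) * 5 ^ (α * p - 1) * S * (mx ^ (α - 1) * t) ^ p := by
        rw [rpow_sub_one_mul_rpow hmx ht]
    _ ≤ (3 + α) ^ p * 4 ^ (p - 1) * 5 ^ (α * p - 1) * S *
          ((3 + α⁻¹) * ‖pw α x - pw α a‖) ^ p := by gcongr
    _ = _ := by
        rw [Real.mul_rpow (by positivity) (by positivity)]
        ring

/-- A Jensen-type inequality for `Φ^p`, where `Φ(|x - a|) ∼ |x^⟨α⟩ - a^⟨α⟩|`. -/
lemma norm_pw_integral_sub_rpow_le {p α : ℝ} (hp : 1 ≤ p) (hα : 0 < α) (hαp : 1 ≤ α * p) {N : ℕ}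
    {Ω : Type*} [MeasurableSpace Ω] {μ : Measure Ω} [IsProbabilityMeasure μ] {u : Ω → Vec N}
    (a : Vec N) (hu : Integrable u μ)
    (hF : Integrable (fun x => ‖pw α (u x) - pw α a‖ ^ p) μ) :
    ‖pw α (∫ x, u x ∂μ) - pw α a‖ ^ p ≤
      2 * ((3 + α) ^ p * 4 ^ (p - 1) * 5 ^ (α * p - 1) * (3 + α⁻¹) ^ p) *
        ∫ x, ‖pw α (u x) - pw α a‖ ^ p ∂μ := by
  have hC0 : 0 < (3 + α) ^ p * 4 ^ (p - 1) * 5 ^ (α * p - 1) * (3 + α⁻¹) ^ p := by positivity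
  have hmono := @norm_pw_sub_rpow_mul_le p α hp hα hαp N
  generalize (3 + α) ^ p * 4 ^ (p - 1) * 5 ^ (α * p - 1) * (3 + α⁻¹) ^ p = C at hC0 hmono ⊢
  set b := ∫ x, u x ∂μ with hb
  rcases (norm_nonneg (b - a)).eq_or_lt with h0 | hS
  · rw [sub_eq_zero.1 (norm_eq_zero.1 h0.symm), sub_self, norm_zero,
      Real.zero_rpow (by linarith)]
    exact mul_nonneg (by positivity) (integral_nonneg fun x => Real.rpow_nonneg (norm_nonneg _) p)
  have hua : Integrable (fun x => ‖u x - a‖) μ := (hu.sub (integrable_const a)).norm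
  have hmean : ‖b - a‖ ≤ ∫ x, ‖u x - a‖ ∂μ := by
    have : b - a = ∫ x, (u x - a) ∂μ := by
      rw [integral_sub hu (integrable_const a)]; simp [hb]
    rw [this]
    exact norm_integral_le_integral_norm _
  have hpt : ∀ x, ‖pw α b - pw α a‖ ^ p * (‖u x - a‖ - ‖b - a‖ / 2) ≤
      C * ‖b - a‖ * ‖pw α (u x) - pw α a‖ ^ p := by
    intro x
    have hL : 0 ≤ ‖pw α b - pw α a‖ ^ p := by positivity
    rcases le_total ‖b - a‖ (2 * ‖u x - a‖) with h | h
    · refine le_trans ?_ (hmono hS h)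
      gcongr
      linarith
    · exact (mul_nonpos_of_nonneg_of_nonpos hL (by linarith)).trans (by positivity)
  have hint := integral_mono ((hua.sub (integrable_const (‖b - a‖ / 2))).const_mul
    (‖pw α b - pw α a‖ ^ p)) (hF.const_mul (C * ‖b - a‖)) hpt
  simp only [Pi.sub_apply] at hint
  rw [integral_const_mul, integral_const_mul, integral_sub hua (integrable_const _)] at hint
  simp only [integral_const, probReal_univ, one_smul] at hint
  have hhalf : ‖pw α b - pw α a‖ ^ p * (‖b - a‖ / 2) ≤
      C * ‖b - a‖ * ∫ x, ‖pw α (u x) - pw α a‖ ^ p ∂μ := by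
    refine le_trans ?_ hint
    gcongr
    linarith
  refine le_of_mul_le_mul_right ?_ hS
  linarith

lemma MeasureTheory.MemLp.pw {p α : ℝ} (hα : 0 < α) {N : ℕ} {Ω : Type*}
    [MeasurableSpace Ω] {μ : Measure Ω} {u : Ω → Vec N}
    (hu : MemLp u (ENNReal.ofReal (α * p)) μ) :
    MemLp (fun x => pw α (u x)) (ENNReal.ofReal p) μ := by
  have h := hu.norm_rpow_div (ENNReal.ofReal α)
  rw [ENNReal.toReal_ofReal hα.le, ← ENNReal.ofReal_div_of_pos hα, mul_div_cancel_left₀ _ hα.ne']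
    at h
  refine h.of_le ((measurable_pw α).comp_aemeasurable hu.1.aemeasurable).aestronglyMeasurable ?_
  refine Filter.Eventually.of_forall fun x => ?_
  rw [norm_pw hα]
  exact le_abs_self _

lemma integrable_norm_pw_sub_rpow {p α : ℝ} (hp : 0 < p) (hα : 0 < α) {N : ℕ} {Ω : Type*}
    [MeasurableSpace Ω] {μ : Measure Ω} [IsFiniteMeasure μ] {u : Ω → Vec N}
    (hu : MemLp u (ENNReal.ofReal (α * p)) μ) (w : Vec N) :
    Integrable (fun x => ‖pw α (u x) - w‖ ^ p) μ := by
  have h := ((hu.pw hα).sub (memLp_const w)).integrable_norm_rpow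
    (by simpa using hp) ENNReal.ofReal_ne_top
  rwa [ENNReal.toReal_ofReal hp.le] at h

lemma norm_sub_rpow_le {E : Type*} [SeminormedAddCommGroup E] {p : ℝ} (hp : 1 ≤ p) (x y z : E) :
    ‖x - z‖ ^ p ≤ 2 ^ (p - 1) * (‖x - y‖ ^ p + ‖z - y‖ ^ p) := by
  have h1 : ‖x - z‖ ≤ ‖x - y‖ + ‖z - y‖ := by
    rw [norm_sub_rev z y]; exact norm_sub_le_norm_sub_add_norm_sub x y z
  refine (Real.rpow_le_rpow (norm_nonneg _) h1 (by linarith)).trans ?_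
  exact_mod_cast NNReal.rpow_add_le_mul_rpow_add_rpow ‖x - y‖₊ ‖z - y‖₊ hp

/-- Quasi-minimality of mean values for powers: let `p ≥ 1` and `α ≥ 1/p`. Then there is a
constant `c = c(α, p)` such that whenever `A ⊆ B ⊂ ℝ^k` are bounded domains of positive
measure, for any `u ∈ L^{αp}(B; ℝ^N)` and any `a ∈ ℝ^N`:
`⨍_B |u^⟨α⟩ − ((u)_A)^⟨α⟩|^p dx ≤ (c|B|/|A|) ⨍_B |u^⟨α⟩ − a^⟨α⟩|^p dx`. -/
theorem mean_quasi_minimality (p α : ℝ) (hp : 1 ≤ p) (hα : 1 / p ≤ α) :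
    ∃ c : ℝ, 0 < c ∧ ∀ (k N : ℕ) (A B : Set (EuclideanSpace ℝ (Fin k))),
      A ⊆ B → IsOpen A → IsConnected A → Bornology.IsBounded A →
      IsOpen B → IsConnected B → Bornology.IsBounded B → 0 < volume A →
      ∀ (u : EuclideanSpace ℝ (Fin k) → Vec N) (a : Vec N),
        MemLp u (ENNReal.ofReal (α * p)) (volume.restrict B) →
        ⨍ x in B, ‖pw α (u x) - pw α (⨍ y in A, u y)‖ ^ p
          ≤ c * (volume B).toReal / (volume A).toReal
              * ⨍ x in B, ‖pw α (u x) - pw α a‖ ^ p := by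
  have hp0 : 0 < p := by linarith
  have hα0 : 0 < α := (by positivity : (0 : ℝ) < 1 / p).trans_le hα
  have hαp : 1 ≤ α * p := (div_le_iff₀ hp0).1 hα
  set C := 2 * ((3 + α) ^ p * 4 ^ (p - 1) * 5 ^ (α * p - 1) * (3 + α⁻¹) ^ p)
  have hC0 : 0 < C := by positivity
  refine ⟨2 ^ (p - 1) * (1 + C), by positivity, ?_⟩
  intro k N A B hAB _ _ hAb _ _ hBb hA u a hu
  have hAfin : volume A ≠ ∞ := hAb.measure_lt_top.ne
  have hBfin : volume B ≠ ∞ := hBb.measure_lt_top.ne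
  have hB : volume B ≠ 0 := (hA.trans_le (measure_mono hAB)).ne'
  have : IsFiniteMeasure (volume.restrict A) := isFiniteMeasure_restrict.2 hAfin
  have : IsFiniteMeasure (volume.restrict B) := isFiniteMeasure_restrict.2 hBfin
  have : NeZero (volume.restrict A) := ⟨by simpa using hA.ne'⟩
  have : NeZero (volume.restrict B) := ⟨by simpa using hB⟩
  have huA := hu.mono_measure (Measure.restrict_mono hAB le_rfl)
  have huA1 : Integrable u (volume.restrict A) := huA.integrable (by simpa using hαp)
  set b := ⨍ y in A, u y
  set F := fun x => ‖pw α (u x) - pw α a‖ ^ p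
  have hF0 : ∀ x, 0 ≤ F x := fun x => by positivity
  have hFA : Integrable F (volume.restrict A) := integrable_norm_pw_sub_rpow hp0 hα0 huA _
  have hFB : Integrable F (volume.restrict B) := integrable_norm_pw_sub_rpow hp0 hα0 hu _
  have hjensen : ‖pw α b - pw α a‖ ^ p ≤ C * ⨍ x in A, F x :=
    norm_pw_integral_sub_rpow_le hp hα0 hαp a huA1.to_average hFA.to_average
  have hvA : 0 < (volume A).toReal := ENNReal.toReal_pos hA.ne' hAfin
  have hvB : 0 < (volume B).toReal := ENNReal.toReal_pos hB hBfin
  have hvAB : (volume A).toReal ≤ (volume B).toReal :=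
    ENNReal.toReal_mono hBfin (measure_mono hAB)
  have hFAB : ⨍ x in A, F x ≤ (volume B).toReal / (volume A).toReal * ⨍ x in B, F x := by
    have hmono : ∫ x in A, F x ≤ ∫ x in B, F x :=
      setIntegral_mono_set hFB (Filter.Eventually.of_forall hF0) hAB.eventuallyLE
    rw [setAverage_eq, setAverage_eq, smul_eq_mul, smul_eq_mul, measureReal_def, measureReal_def]
    calc (volume A).toReal⁻¹ * ∫ x in A, F x ≤ (volume A).toReal⁻¹ * ∫ x in B, F x := by gcongr
      _ = _ := by field_simp
  have havg0 : 0 ≤ ⨍ x in B, F x := integral_nonneg hF0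
  have hF1 : ⨍ x in B, F x ≤ (volume B).toReal / (volume A).toReal * ⨍ x in B, F x :=
    le_mul_of_one_le_left havg0 ((one_le_div hvA).2 hvAB)
  have htri : ⨍ x in B, ‖pw α (u x) - pw α b‖ ^ p ≤
      ⨍ x in B, 2 ^ (p - 1) * (F x + ‖pw α b - pw α a‖ ^ p) :=
    integral_mono (integrable_norm_pw_sub_rpow hp0 hα0 hu _).to_average
      ((hFB.to_average.add (integrable_const _)).const_mul _)
      fun x => norm_sub_rpow_le hp _ _ _
  calc ⨍ x in B, ‖pw α (u x) - pw α b‖ ^ p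
      ≤ 2 ^ (p - 1) * ((⨍ x in B, F x) + ‖pw α b - pw α a‖ ^ p) := by
        refine htri.trans_eq ?_
        rw [average, integral_const_mul, integral_add hFB.to_average (integrable_const _)]
        rw [integral_const, probReal_univ, one_smul, ← average]
    _ ≤ 2 ^ (p - 1) * ((volume B).toReal / (volume A).toReal * (⨍ x in B, F x) +
          C * ((volume B).toReal / (volume A).toReal * ⨍ x in B, F x)) := by
        gcongr
        exact hjensen.trans (by gcongr)
    _ = _ := by ring
end
end

section
/- Gagliardo–Nirenberg inequality on balls: Let 1 ≤ p, q, r < ∞ and θ ∈ (0,1) be such that −n/p ≤ θ(1 − n/q) − (1 − θ) n/r. Then there exists a constant c = c(n,p) such that for any ball B_ρ(x_o) ⊂ ℝ^n with ρ > 0 and any function u ∈ W^{1,q}(B_ρ(x_o)) with u ∈ L^r(B_ρ(x_o)) one has ⨍_{B_ρ(x_o)} |u|^p/ρ^p dx ≤ c [⨍_{B_ρ(x_o)} (|u|^q/ρ^q + |Du|^q) dx]^{θp/q} · [⨍_{B_ρ(x_o)} |u|^r/ρ^r dx]^{(1−θ)p/r}. -/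
open MeasureTheory Set
open scoped ENNReal

noncomputable section

abbrev Spc (n : ℕ) := EuclideanSpace ℝ (Fin n)

/-- `Du` is the weak (spatial) gradient of `u` on the ball `B_ρ(x₀)`: for every smooth,
compactly supported `ψ` with support in the ball and every coordinate direction `i`,
`∫ u ∂_i ψ = − ∫ (Du)_i ψ`. -/
def IsWeakGradOn {n : ℕ} (x₀ : Spc n) (ρ : ℝ) (u : Spc n → ℝ) (Du : Spc n → Spc n) : Prop :=
  ∀ ψ : Spc n → ℝ, ContDiff ℝ (⊤ : ℕ∞) ψ → HasCompactSupport ψ →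
    tsupport ψ ⊆ Metric.ball x₀ ρ → ∀ i : Fin n,
      ∫ x in Metric.ball x₀ ρ, u x * fderiv ℝ ψ x (EuclideanSpace.single i 1)
        = - ∫ x in Metric.ball x₀ ρ, Du x i * ψ x

/-- The odd power `y ↦ y |y| ^ (γ - 1)` is differentiable for `γ ≥ 1`. -/
lemma hasDerivAt_mul_abs_rpow {γ : ℝ} (hγ : 1 ≤ γ) (y : ℝ) :
    HasDerivAt (fun y : ℝ => y * |y| ^ (γ - 1)) (γ * |y| ^ (γ - 1)) y := by
  rcases hγ.eq_or_lt with rfl | hγ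
  · simpa using hasDerivAt_id' y
  rcases lt_trichotomy y 0 with hy | rfl | hy
  · have h : HasDerivAt (fun y : ℝ => -((-y) ^ γ)) (-(γ * (-y) ^ (γ - 1) * (-1))) y :=
      ((Real.hasDerivAt_rpow_const (Or.inr hγ.le)).comp y (hasDerivAt_neg y)).neg
    rw [abs_of_neg hy]
    rw [show -(γ * (-y) ^ (γ - 1) * (-1)) = γ * (-y) ^ (γ - 1) by ring] at h
    refine h.congr_of_eventuallyEq ?_
    filter_upwards [Iio_mem_nhds hy] with z (hz : z < 0)
    rw [abs_of_neg hz, Real.rpow_sub_one (by linarith : -z ≠ 0)]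
    have := hz.ne
    field_simp
  · rw [hasDerivAt_iff_tendsto_slope_zero]
    have : Filter.Tendsto (fun t : ℝ => |t| ^ (γ - 1)) (nhdsWithin 0 {0}ᶜ)
        (nhds (|0| ^ (γ - 1))) := by
      refine Filter.Tendsto.mono_left (ContinuousAt.tendsto ?_) nhdsWithin_le_nhds
      exact continuous_abs.continuousAt.rpow_const (Or.inr (by linarith))
    have h0 : |(0 : ℝ)| ^ (γ - 1) = 0 := by
      rw [abs_zero, Real.zero_rpow (by linarith)]
    rw [h0] at this
    rw [h0, mul_zero, mul_zero]
    refine this.congr' ?_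
    filter_upwards [self_mem_nhdsWithin] with t (ht : t ≠ 0)
    simp [ht]
  · have h : HasDerivAt (fun y : ℝ => y ^ γ) (γ * y ^ (γ - 1)) y :=
      Real.hasDerivAt_rpow_const (Or.inr hγ.le)
    rw [abs_of_pos hy]
    refine h.congr_of_eventuallyEq ?_
    filter_upwards [Ioi_mem_nhds hy] with z (hz : 0 < z)
    rw [abs_of_pos hz, Real.rpow_sub_one hz.ne']
    field_simp

lemma contDiff_mul_abs_rpow {γ : ℝ} (hγ : 1 ≤ γ) :
    ContDiff ℝ 1 (fun y : ℝ => y * |y| ^ (γ - 1)) := by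
  rw [contDiff_one_iff_deriv]
  refine ⟨fun y => (hasDerivAt_mul_abs_rpow hγ y).differentiableAt, ?_⟩
  rw [show deriv (fun y : ℝ => y * |y| ^ (γ - 1)) = fun y => γ * |y| ^ (γ - 1) from
    funext fun y => (hasDerivAt_mul_abs_rpow hγ y).deriv]
  exact continuous_const.mul (continuous_abs.rpow_const fun _ => Or.inr (by linarith))

lemma enorm_mul_abs_rpow {γ : ℝ} (hγ : 1 ≤ γ) (y : ℝ) :
    ‖y * |y| ^ (γ - 1)‖ₑ = ‖y‖ₑ ^ γ := by
  rw [enorm_mul, Real.enorm_rpow_of_nonneg (abs_nonneg y) (by linarith), Real.enorm_abs]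
  nth_rewrite 1 [← ENNReal.rpow_one ‖y‖ₑ]
  rw [← ENNReal.rpow_add_of_nonneg _ _ zero_le_one (by linarith)]
  congr 1
  ring

/-- A one-dimensional Sobolev inequality on an interval. -/
lemma enorm_le_lintegral_Icc {g : ℝ → ℝ} (hg : ContDiff ℝ 1 g) {a b c : ℝ} (hab : a < b)
    (hc : c ∈ Icc a b) :
    ‖g c‖ₑ ≤ ∫⁻ t in Icc a b, (‖g t‖ₑ / ENNReal.ofReal (b - a) + ‖deriv g t‖ₑ) := by
  have key : ∀ t ∈ Icc a b, ‖g c‖ₑ ≤ ‖g t‖ₑ + ∫⁻ s in Icc a b, ‖deriv g s‖ₑ := by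
    intro t ht
    have h1 : ‖g c - g t‖ₑ ≤ ∫⁻ s in Icc a b, ‖deriv g s‖ₑ := by
      rcases le_total t c with htc | htc
      · exact (enorm_sub_le_lintegral_deriv_of_contDiffOn_Icc hg.contDiffOn htc).trans
          (lintegral_mono_set (Icc_subset_Icc ht.1 hc.2))
      · rw [enorm_sub_rev]
        exact (enorm_sub_le_lintegral_deriv_of_contDiffOn_Icc hg.contDiffOn htc).trans
          (lintegral_mono_set (Icc_subset_Icc hc.1 ht.2))
    calc ‖g c‖ₑ = ‖g t + (g c - g t)‖ₑ := by congr 1; ring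
      _ ≤ ‖g t‖ₑ + ‖g c - g t‖ₑ := enorm_add_le _ _
      _ ≤ _ := by gcongr
  have hd0 : ENNReal.ofReal (b - a) ≠ 0 := by simpa using hab
  have hdt : ENNReal.ofReal (b - a) ≠ ∞ := ENNReal.ofReal_ne_top
  have h2 : ‖g c‖ₑ * ENNReal.ofReal (b - a) ≤
      (∫⁻ t in Icc a b, ‖g t‖ₑ) + (∫⁻ s in Icc a b, ‖deriv g s‖ₑ) * ENNReal.ofReal (b - a) := by
    calc ‖g c‖ₑ * ENNReal.ofReal (b - a) = ∫⁻ _ in Icc a b, ‖g c‖ₑ := by simp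
      _ ≤ ∫⁻ t in Icc a b, (‖g t‖ₑ + ∫⁻ s in Icc a b, ‖deriv g s‖ₑ) :=
          setLIntegral_mono' measurableSet_Icc key
      _ = _ := by
          rw [lintegral_add_right _ measurable_const]
          simp
  rw [lintegral_add_left (by have := hg.continuous; fun_prop)]
  simp_rw [div_eq_mul_inv]
  rw [lintegral_mul_const _ (by have := hg.continuous; fun_prop)]
  rw [← ENNReal.le_div_iff_mul_le (Or.inl hd0) (Or.inl hdt)] at h2
  refine h2.trans_eq ?_
  rw [ENNReal.add_div, ENNReal.mul_div_cancel_right hd0 hdt, div_eq_mul_inv]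

/-- The Sobolev conjugate `n / (n - 1)` of `1` in dimension `n`, equal to `∞` for `n = 1`. -/
def sobolevConj (n : ℕ) : ℝ≥0∞ := (ENNReal.ofReal (1 - 1 / n))⁻¹

lemma one_le_sobolevConj {n : ℕ} : 1 ≤ sobolevConj n := by
  rw [sobolevConj, ENNReal.one_le_inv]
  refine ENNReal.ofReal_le_one.2 ?_
  have : (0 : ℝ) ≤ 1 / n := by positivity
  linarith

lemma norm_toLp_update_sq {n : ℕ} (x : Fin n → ℝ) (i : Fin n) (s : ℝ) :
    ‖WithLp.toLp 2 (Function.update x i s)‖ ^ 2 = ‖WithLp.toLp 2 x‖ ^ 2 - x i ^ 2 + s ^ 2 := by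
  rw [EuclideanSpace.real_norm_sq_eq, EuclideanSpace.real_norm_sq_eq]
  simp only []
  rw [← Finset.add_sum_erase _ _ (Finset.mem_univ i),
    ← Finset.add_sum_erase _ _ (Finset.mem_univ i)]
  have : ∑ j ∈ Finset.univ.erase i, Function.update x i s j ^ 2
      = ∑ j ∈ Finset.univ.erase i, x j ^ 2 :=
    Finset.sum_congr rfl fun j hj => by
      rw [Function.update_of_ne (Finset.ne_of_mem_erase hj)]
  rw [this, Function.update_self]
  ring

lemma exists_Icc_update_mem_ball {n : ℕ} {R δ : ℝ} (hδ : 0 < δ) (hδR : δ ≤ R / 2)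
    {x : Fin n → ℝ} {i : Fin n} (hx : ‖WithLp.toLp 2 x‖ < R)
    (hxi : ‖WithLp.toLp 2 x‖ < R / 2 ∨ δ ≤ |x i|) :
    ∃ a b : ℝ, b - a = δ ∧ x i ∈ Icc a b ∧
      ∀ s ∈ Icc a b, WithLp.toLp 2 (Function.update x i s) ∈ Metric.ball (0 : Spc n) R := by
  have hx0 := norm_nonneg (WithLp.toLp 2 x)
  have main : ∀ s, s ^ 2 ≤ x i ^ 2 →
      WithLp.toLp 2 (Function.update x i s) ∈ Metric.ball (0 : Spc n) R := by
    intro s hs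
    rw [mem_ball_zero_iff]
    refine lt_of_pow_lt_pow_left₀ 2 (by linarith) ?_
    rw [norm_toLp_update_sq]
    nlinarith
  rcases le_or_gt δ |x i| with h | h
  · rcases le_total 0 (x i) with h0 | h0
    · rw [abs_of_nonneg h0] at h
      exact ⟨x i - δ, x i, by ring, ⟨by linarith, le_rfl⟩,
        fun s hs => main s (by nlinarith [hs.1, hs.2])⟩
    · rw [abs_of_nonpos h0] at h
      exact ⟨x i, x i + δ, by ring, ⟨le_rfl, by linarith⟩,
        fun s hs => main s (by nlinarith [hs.1, hs.2])⟩
  · have hx2 : ‖WithLp.toLp 2 x‖ < R / 2 := hxi.resolve_right (not_le.2 h)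
    rw [abs_lt] at h
    have : ∀ a b : ℝ, b - a = δ → -δ ≤ a → b ≤ δ → ∀ s ∈ Icc a b,
        WithLp.toLp 2 (Function.update x i s) ∈ Metric.ball (0 : Spc n) R := by
      intro a b _ ha hb s hs
      rw [mem_ball_zero_iff]
      refine lt_of_pow_lt_pow_left₀ 2 (by linarith) ?_
      rw [norm_toLp_update_sq]
      have h1 : s ^ 2 ≤ δ ^ 2 := by nlinarith [hs.1, hs.2]
      nlinarith [sq_nonneg (x i)]
    rcases le_total 0 (x i) with h0 | h0
    · exact ⟨0, δ, by ring, ⟨h0, h.2.le⟩, this _ _ (by ring) (by linarith) le_rfl⟩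
    · exact ⟨-δ, 0, by ring, ⟨h.1.le, h0⟩, this _ _ (by ring) le_rfl (by linarith)⟩

lemma enorm_le_lintegral_update {n : ℕ} {R δ : ℝ} (hδ : 0 < δ) (hδR : δ ≤ R / 2)
    {v : Spc n → ℝ} (hv : ContDiff ℝ 1 v)
    {x : Fin n → ℝ} {i : Fin n} (hx : ‖WithLp.toLp 2 x‖ < R)
    (hxi : ‖WithLp.toLp 2 x‖ < R / 2 ∨ δ ≤ |x i|) :
    ‖v (WithLp.toLp 2 x)‖ₑ ≤ ∫⁻ s, (Metric.ball (0 : Spc n) R).indicator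
      (fun y => ‖v y‖ₑ / ENNReal.ofReal δ + ‖fderiv ℝ v y‖ₑ)
        (WithLp.toLp 2 (Function.update x i s)) := by
  obtain ⟨a, b, hab, hmem, hball⟩ := exists_Icc_update_mem_ball hδ hδR hx hxi
  have hline : ∀ s : ℝ, WithLp.toLp 2 (Function.update x i s)
      = WithLp.toLp 2 x + (s - x i) • EuclideanSpace.single i (1 : ℝ) := by
    intro s
    ext j
    rcases eq_or_ne j i with rfl | hj
    · simp
    · simp [hj]
  have hder : ∀ s : ℝ, HasDerivAt (fun s : ℝ => WithLp.toLp 2 (Function.update x i s))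
      (EuclideanSpace.single i (1 : ℝ)) s := by
    intro s
    simp_rw [hline]
    simpa using (((hasDerivAt_id' s).sub_const (x i)).smul_const
      (EuclideanSpace.single i (1 : ℝ))).const_add (WithLp.toLp 2 x)
  have hsm : ContDiff ℝ 1 (fun s : ℝ => WithLp.toLp 2 (Function.update x i s)) := by
    simp_rw [hline]
    fun_prop
  have hg : ContDiff ℝ 1 (fun s : ℝ => v (WithLp.toLp 2 (Function.update x i s))) := hv.comp hsm
  have h1 := enorm_le_lintegral_Icc hg (by linarith : a < b) hmem
  simp only [Function.update_eq_self] at h1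
  refine h1.trans ?_
  rw [← lintegral_indicator measurableSet_Icc]
  refine lintegral_mono fun s => ?_
  by_cases hs : s ∈ Icc a b
  · rw [indicator_of_mem hs, indicator_of_mem (hball s hs), hab]
    gcongr
    have : HasDerivAt (fun s : ℝ => v (WithLp.toLp 2 (Function.update x i s)))
        (fderiv ℝ v (WithLp.toLp 2 (Function.update x i s)) (EuclideanSpace.single i 1)) s :=
      ((hv.differentiable one_ne_zero _).hasFDerivAt).comp_hasDerivAt s (hder s)
    rw [this.deriv, enorm_le_iff_norm_le]
    simpa using (fderiv ℝ v (WithLp.toLp 2 (Function.update x i s))).le_opNorm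
      (EuclideanSpace.single i 1)
  · rw [indicator_of_notMem hs]
    exact zero_le

lemma measurable_indicator_ball {n : ℕ} (c : ℝ≥0∞) (x₀ : Spc n) (R : ℝ)
    {v : Spc n → ℝ} (hv : ContDiff ℝ 1 v) :
    Measurable ((Metric.ball x₀ R).indicator
      (fun y => ‖v y‖ₑ / c + ‖fderiv ℝ v y‖ₑ)) := by
  refine Measurable.indicator ?_ measurableSet_ball
  have h1 := hv.continuous
  have h2 := hv.continuous_fderiv one_ne_zero
  exact (h1.enorm.measurable.div_const _).add h2.enorm.measurable

/-- Gagliardo's argument on the set of points of a ball from which every coordinate direction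
stays in the ball for a length at least `δ`. -/
lemma eLpNorm_indicator_le_of_coord {n : ℕ} (hn : 1 ≤ n) {R δ : ℝ} (hδ : 0 < δ) (hδR : δ ≤ R / 2)
    {v : Spc n → ℝ} (hv : ContDiff ℝ 1 v) {S : Set (Spc n)}
    (hS : ∀ x ∈ S, ‖x‖ < R ∧ (‖x‖ < R / 2 ∨ ∀ i, δ ≤ |x i|)) :
    eLpNorm (S.indicator v) (sobolevConj n) volume ≤
      ∫⁻ y in Metric.ball (0 : Spc n) R, (‖v y‖ₑ / ENNReal.ofReal δ + ‖fderiv ℝ v y‖ₑ) := by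
  set f : Spc n → ℝ≥0∞ := (Metric.ball (0 : Spc n) R).indicator
    (fun y => ‖v y‖ₑ / ENNReal.ofReal δ + ‖fderiv ℝ v y‖ₑ) with hf
  have hfm : Measurable f := measurable_indicator_ball _ _ _ hv
  have hfm' : Measurable fun x : Fin n → ℝ => f (WithLp.toLp 2 x) :=
    hfm.comp (PiLp.volume_preserving_toLp (Fin n)).measurable
  rw [← lintegral_indicator measurableSet_ball, ← hf]
  have hint : ∫⁻ x : Fin n → ℝ, f (WithLp.toLp 2 x) = ∫⁻ y, f y :=
    (PiLp.volume_preserving_toLp (Fin n)).lintegral_comp hfm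
  have hpt : ∀ (x : Fin n → ℝ) (i : Fin n), ‖S.indicator v (WithLp.toLp 2 x)‖ₑ ≤
      ∫⁻ s, f (WithLp.toLp 2 (Function.update x i s)) := by
    intro x i
    by_cases hx : WithLp.toLp 2 x ∈ S
    · rw [indicator_of_mem hx]
      obtain ⟨h1, h2⟩ := hS _ hx
      exact enorm_le_lintegral_update hδ hδR hv h1 (h2.imp id fun h => h i)
    · rw [indicator_of_notMem hx]
      simp
  rcases hn.eq_or_lt with rfl | hn2
  · have : sobolevConj 1 = ∞ := by simp [sobolevConj]
    rw [this, eLpNorm_exponent_top]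
    refine essSup_le_of_ae_le _ (Filter.Eventually.of_forall fun y => ?_)
    refine (hpt (WithLp.ofLp y) 0).trans_eq ?_
    beta_reduce
    have huniq := (volume_preserving_funUnique (Fin 1) ℝ).symm.lintegral_comp hfm'
    rw [← hint]
    refine Eq.trans ?_ (huniq.trans (by congr!))
    refine lintegral_congr fun s => ?_
    congr 2
    ext j
    fin_cases j
    simp
  · have hn0 : (1 : ℝ) < n := by exact_mod_cast hn2
    set p : ℝ := (1 - 1 / (n : ℝ))⁻¹ with hp
    have h1n : 0 < 1 - 1 / (n : ℝ) := by
      rw [sub_pos, div_lt_one (by linarith)]; exact hn0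
    have hp0 : 0 < p := inv_pos.2 h1n
    have hconj : Real.HolderConjugate (Fintype.card (Fin n)) p := by
      rw [Fintype.card_fin, Real.holderConjugate_iff]
      refine ⟨hn0, ?_⟩
      rw [hp, inv_inv, one_div]
      ring
    have hsob : sobolevConj n = ENNReal.ofReal p := by
      rw [sobolevConj, hp, ENNReal.ofReal_inv_of_pos h1n]
    rw [hsob, eLpNorm_eq_lintegral_rpow_enorm_toReal (by simpa using hp0) ENNReal.ofReal_ne_top,
      ENNReal.toReal_ofReal hp0.le, one_div, ENNReal.rpow_inv_le_iff hp0, ← hint]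
    have hgrid := lintegral_prod_lintegral_pow_le (fun _ : Fin n => (volume : Measure ℝ)) hconj hfm'
    rw [← volume_pi] at hgrid
    refine le_trans ?_ hgrid
    have hc : ∫⁻ y, ‖S.indicator v y‖ₑ ^ p
        = ∫⁻ x : Fin n → ℝ, ‖S.indicator v (WithLp.toLp 2 x)‖ₑ ^ p :=
      ((PiLp.volume_preserving_toLp (Fin n)).lintegral_comp_emb
        (MeasurableEquiv.toLp 2 (Fin n → ℝ)).measurableEmbedding _).symm
    rw [hc]
    refine lintegral_mono fun x => ?_
    calc ‖S.indicator v (WithLp.toLp 2 x)‖ₑ ^ p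
        = ∏ _i : Fin n, ‖S.indicator v (WithLp.toLp 2 x)‖ₑ ^ (1 / ((n : ℝ) - 1)) := by
          rw [Finset.prod_const, Finset.card_univ, Fintype.card_fin, ← ENNReal.rpow_natCast,
            ← ENNReal.rpow_mul]
          congr 1
          rw [hp]
          have : (n : ℝ) - 1 ≠ 0 := by linarith
          field_simp
      _ ≤ _ := by
          rw [Fintype.card_fin]
          refine Finset.prod_le_prod' fun i _ => ?_
          exact ENNReal.rpow_le_rpow (hpt x i) (by
            have : 0 < (n : ℝ) - 1 := by linarith
            positivity)

/-- Finitely many linear isometries suffice to make all coordinates of every unit vector large. -/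
lemma exists_finset_isometry_coord {n : ℕ} (hn : 1 ≤ n) :
    ∃ (c : ℝ) (T : Finset (Spc n ≃ₗᵢ[ℝ] Spc n)), 0 < c ∧ c ≤ 1 ∧
      ∀ x : Spc n, ∃ O ∈ T, ∀ i, c * ‖x‖ ≤ |O x i| := by
  have hn0 : (1 : ℝ) ≤ n := by exact_mod_cast hn
  have hsq : 1 ≤ √(n : ℝ) := Real.one_le_sqrt.2 hn0
  set w : Spc n := WithLp.toLp 2 (fun _ => 1 / √(n : ℝ)) with hw
  have hwn : ‖w‖ = 1 := by
    have : ‖w‖ ^ 2 = 1 := by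
      rw [EuclideanSpace.real_norm_sq_eq]
      simp only [hw, Finset.sum_const, Finset.card_univ, Fintype.card_fin, nsmul_eq_mul, div_pow,
        one_pow, Real.sq_sqrt (by linarith : (0 : ℝ) ≤ n)]
      field_simp
    exact (pow_eq_one_iff_of_nonneg (norm_nonneg _) two_ne_zero).1 this
  set c : ℝ := 1 / (2 * √(n : ℝ)) with hc
  have hc0 : 0 < c := by positivity
  have hcw : c < 1 / √(n : ℝ) := by
    rw [hc]
    gcongr
    linarith
  obtain ⟨T, hT⟩ := (isCompact_sphere (0 : Spc n) 1).elim_finite_subcover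
    (fun O : Spc n ≃ₗᵢ[ℝ] Spc n => {x | ∀ i, c < |O x i|}) (fun O => by
      simp only [ofPred_forall]
      exact isOpen_iInter_of_finite fun i => isOpen_lt (by fun_prop) (by fun_prop)) (by
      intro x hx
      rw [mem_sphere_zero_iff_norm] at hx
      refine mem_iUnion.2 ⟨(ℝ ∙ (x - w))ᗮ.reflection, fun i => ?_⟩
      rw [Submodule.reflection_sub (hx.trans hwn.symm), hw]
      simp only []
      rw [abs_of_pos (by positivity)]
      exact hcw)
  refine ⟨c, T, hc0, ?_, fun x => ?_⟩
  · rw [hc, div_le_one (by positivity)]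
    linarith
  · have main : ∀ y : Spc n, ‖y‖ = 1 → ∃ O ∈ T, ∀ i, c < |O y i| := by
      intro y hy
      simpa using hT (mem_sphere_zero_iff_norm.2 hy)
    rcases eq_or_ne x 0 with rfl | hx
    · obtain ⟨O, hO, -⟩ := main w hwn
      exact ⟨O, hO, fun i => by simp⟩
    · have hx' : 0 < ‖x‖ := norm_pos_iff.2 hx
      obtain ⟨O, hO, h⟩ := main (‖x‖⁻¹ • x) (by rw [norm_smul, norm_inv, norm_norm]; field_simp)
      refine ⟨O, hO, fun i => ?_⟩
      have h1 := h i
      rw [map_smul, PiLp.smul_apply, smul_eq_mul, abs_mul, abs_inv, abs_norm] at h1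
      rw [inv_mul_eq_div, lt_div_iff₀ hx'] at h1
      exact h1.le

lemma measurableSet_norm_lt_and {n : ℕ} {f : Spc n → ℝ} {G : Spc n → Spc n} (hf : Measurable f)
    (hG : Measurable G) (R δ : ℝ) :
    MeasurableSet {x | f x < R ∧ (f x < R / 2 ∨ ∀ i, δ ≤ |G x i|)} := by
  have h : MeasurableSet {x | ∀ i, δ ≤ |G x i|} := by
    rw [ofPred_forall]
    exact MeasurableSet.iInter fun i => measurableSet_le measurable_const (by fun_prop)
  exact (measurableSet_lt hf measurable_const).inter
    ((measurableSet_lt hf measurable_const).union h)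

/-- The coordinate estimate transported by the rigid motion `x ↦ O (x - x₀)`. -/
lemma eLpNorm_indicator_le_of_isometry {n : ℕ} (hn : 1 ≤ n) {R δ : ℝ} (hδ : 0 < δ)
    (hδR : δ ≤ R / 2) {v : Spc n → ℝ} (hv : ContDiff ℝ 1 v) (x₀ : Spc n)
    (O : Spc n ≃ₗᵢ[ℝ] Spc n) :
    eLpNorm ({x | ‖x - x₀‖ < R ∧ (‖x - x₀‖ < R / 2 ∨ ∀ i, δ ≤ |O (x - x₀) i|)}.indicator v)
      (sobolevConj n) volume ≤
      ∫⁻ y in Metric.ball x₀ R, (‖v y‖ₑ / ENNReal.ofReal δ + ‖fderiv ℝ v y‖ₑ) := by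
  set Φ : Spc n → Spc n := fun x => O (x - x₀) with hΦ
  set vO : Spc n → ℝ := fun y => v (O.symm y + x₀) with hvO
  set S : Set (Spc n) := {x | ‖x‖ < R ∧ (‖x‖ < R / 2 ∨ ∀ i, δ ≤ |x i|)} with hS
  have hΦm : MeasurePreserving Φ volume volume :=
    O.measurePreserving.comp (measurePreserving_sub_right volume x₀)
  have hΦe : MeasurableEmbedding Φ :=
    O.toMeasurableEquiv.measurableEmbedding.comp (measurableEmbedding_subRight x₀)
  have hvOs : ContDiff ℝ 1 vO := hv.comp (O.symm.contDiff.add contDiff_const)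
  have hvΦ : ∀ x, vO (Φ x) = v x := fun x => by simp [hvO, hΦ]
  have hpre : Φ ⁻¹' Metric.ball 0 R = Metric.ball x₀ R := by
    ext x
    rw [mem_preimage, mem_ball_zero_iff, mem_ball_iff_norm, hΦ, O.norm_map]
  have hfd : ∀ x, ‖fderiv ℝ vO (Φ x)‖ₑ ≤ ‖fderiv ℝ v x‖ₑ := by
    intro x
    have h1 : HasFDerivAt (fun y => O.symm y + x₀)
        (O.symm.toContinuousLinearEquiv : Spc n →L[ℝ] Spc n) (Φ x) :=
      O.symm.toContinuousLinearEquiv.hasFDerivAt.add_const x₀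
    have h2 : HasFDerivAt v (fderiv ℝ v x) (O.symm (Φ x) + x₀) := by
      have : O.symm (Φ x) + x₀ = x := by simp [hΦ]
      rw [this]
      exact (hv.differentiable one_ne_zero x).hasFDerivAt
    have h3 : HasFDerivAt vO ((fderiv ℝ v x).comp
      (O.symm.toContinuousLinearEquiv : Spc n →L[ℝ] Spc n)) (Φ x) := h2.comp (Φ x) h1
    rw [h3.fderiv, enorm_le_iff_norm_le]
    refine ContinuousLinearMap.opNorm_le_bound _ (norm_nonneg _) fun y => ?_
    refine ((fderiv ℝ v x).le_opNorm _).trans_eq ?_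
    congr 1
    exact O.symm.norm_map y
  have hSm : MeasurableSet S :=
    measurableSet_norm_lt_and measurable_norm measurable_id R δ
  have h1 := eLpNorm_indicator_le_of_coord hn hδ hδR hvOs (S := S) (fun x hx => hx)
  rw [← eLpNorm_comp_measurePreserving
      ((hvOs.continuous.measurable.indicator hSm).aestronglyMeasurable) hΦm,
    ← hΦm.setLIntegral_comp_preimage_emb hΦe, hpre] at h1
  refine le_trans (le_of_eq ?_) (h1.trans (lintegral_mono fun x => ?_))
  · congr 1
    funext x
    rw [Function.comp_apply, indicator_apply, indicator_apply, hvΦ]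
    have : ‖Φ x‖ = ‖x - x₀‖ := O.norm_map _
    simp only [hS, mem_ofPred_eq, this]
    rfl
  · simp only [hvΦ]
    gcongr
    exact hfd x

/-- The Sobolev inequality `W^{1,1} ⊂ L^{n/(n-1)}` on balls, for `C¹` functions. -/
lemma exists_eLpNorm_ball_le {n : ℕ} (hn : 1 ≤ n) :
    ∃ C : ℝ, 0 < C ∧ ∀ (x₀ : Spc n) (R : ℝ), 0 < R → ∀ v : Spc n → ℝ, ContDiff ℝ 1 v →
      eLpNorm v (sobolevConj n) (volume.restrict (Metric.ball x₀ R)) ≤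
        ENNReal.ofReal C *
          ∫⁻ y in Metric.ball x₀ R, (‖v y‖ₑ / ENNReal.ofReal R + ‖fderiv ℝ v y‖ₑ) := by
  obtain ⟨c, T, hc0, hc1, hT⟩ := exists_finset_isometry_coord hn
  have hTpos : 0 < T.card := by
    obtain ⟨O, hO, -⟩ := hT 0
    exact Finset.card_pos.2 ⟨O, hO⟩
  refine ⟨T.card * (2 / c), by positivity, fun x₀ R hR v hv => ?_⟩
  have hδ : 0 < c / 2 * R := by positivity
  have hδR : c / 2 * R ≤ R / 2 := by nlinarith
  let S : (Spc n ≃ₗᵢ[ℝ] Spc n) → Set (Spc n) := fun O =>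
    {x | ‖x - x₀‖ < R ∧ (‖x - x₀‖ < R / 2 ∨ ∀ i, c / 2 * R ≤ |O (x - x₀) i|)}
  have hSm : ∀ O, MeasurableSet (S O) := fun O =>
    measurableSet_norm_lt_and (f := fun x => ‖x - x₀‖) (G := fun x => O (x - x₀))
      (by fun_prop) (by fun_prop) R (c / 2 * R)
  rw [← eLpNorm_indicator_eq_eLpNorm_restrict measurableSet_ball]
  calc eLpNorm ((Metric.ball x₀ R).indicator v) (sobolevConj n) volume
      ≤ eLpNorm (∑ O ∈ T, fun x => ‖(S O).indicator v x‖) (sobolevConj n) volume := by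
        refine eLpNorm_mono fun x => ?_
        rw [Finset.sum_apply, Real.norm_of_nonneg (Finset.sum_nonneg fun _ _ => norm_nonneg _)]
        by_cases hx : x ∈ Metric.ball x₀ R
        · rw [indicator_of_mem hx]
          rw [mem_ball_iff_norm] at hx
          obtain ⟨O, hO, h⟩ := hT (x - x₀)
          have hxS : x ∈ S O := by
            refine ⟨hx, ?_⟩
            rcases lt_or_ge ‖x - x₀‖ (R / 2) with h' | h'
            · exact Or.inl h'
            · exact Or.inr fun i => le_trans (by nlinarith) (h i)
          refine le_trans (le_of_eq ?_)
            (Finset.single_le_sum (f := fun O => ‖(S O).indicator v x‖)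
              (fun _ _ => norm_nonneg _) hO)
          rw [indicator_of_mem hxS]
        · rw [indicator_of_notMem hx, norm_zero]
          exact Finset.sum_nonneg fun _ _ => norm_nonneg _
    _ ≤ ∑ O ∈ T, eLpNorm (fun x => ‖(S O).indicator v x‖) (sobolevConj n) volume :=
        eLpNorm_sum_le (fun O _ =>
          (hv.continuous.measurable.indicator (hSm O)).norm.aestronglyMeasurable) one_le_sobolevConj
    _ ≤ ∑ O ∈ T, ∫⁻ y in Metric.ball x₀ R,
          (‖v y‖ₑ / ENNReal.ofReal (c / 2 * R) + ‖fderiv ℝ v y‖ₑ) := by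
        refine Finset.sum_le_sum fun O _ => ?_
        rw [eLpNorm_norm]
        exact eLpNorm_indicator_le_of_isometry hn hδ hδR hv x₀ O
    _ ≤ ∑ O ∈ T, ENNReal.ofReal (2 / c) *
          ∫⁻ y in Metric.ball x₀ R, (‖v y‖ₑ / ENNReal.ofReal R + ‖fderiv ℝ v y‖ₑ) := by
        refine Finset.sum_le_sum fun O _ => ?_
        rw [← lintegral_const_mul' _ _ ENNReal.ofReal_ne_top]
        refine lintegral_mono fun y => ?_
        rw [mul_add]
        refine add_le_add (le_of_eq ?_) ?_
        · rw [ENNReal.ofReal_mul (by positivity), div_eq_mul_inv _ (ENNReal.ofReal R),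
            div_eq_mul_inv _ (ENNReal.ofReal (c / 2) * _),
            ENNReal.mul_inv (Or.inr ENNReal.ofReal_ne_top) (Or.inl ENNReal.ofReal_ne_top),
            ← ENNReal.ofReal_inv_of_pos (by positivity : 0 < c / 2), inv_div]
          ring
        · refine le_mul_of_one_le_left zero_le ?_
          rw [ENNReal.one_le_ofReal, le_div_iff₀ hc0]
          linarith
    _ = _ := by
        rw [Finset.sum_const, nsmul_eq_mul, ENNReal.ofReal_mul (by positivity),
          ENNReal.ofReal_natCast, mul_assoc]

/-- Convolution with a normalised bump function. -/
def mollify {n : ℕ} (φ : ContDiffBump (0 : Spc n)) (f : Spc n → ℝ) : Spc n → ℝ :=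
  convolution (φ.normed volume) f (ContinuousLinearMap.lsmul ℝ ℝ) volume

lemma contDiff_mollify {n : ℕ} (φ : ContDiffBump (0 : Spc n)) {f : Spc n → ℝ}
    (hf : LocallyIntegrable f volume) : ContDiff ℝ 1 (mollify φ f) :=
  φ.hasCompactSupport_normed.contDiff_convolution_left (n := 1) _ φ.contDiff_normed hf

lemma enorm_mollify_le {n : ℕ} (φ : ContDiffBump (0 : Spc n)) (f : Spc n → ℝ) (x : Spc n) :
    ‖mollify φ f x‖ₑ ≤ ∫⁻ y, ‖φ.normed volume (x - y)‖ₑ * ‖f y‖ₑ := by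
  rw [mollify, convolution_eq_swap]
  refine (enorm_integral_le_lintegral_enorm _).trans_eq ?_
  simp [enorm_mul]

lemma lintegral_enorm_normed {n : ℕ} (φ : ContDiffBump (0 : Spc n)) :
    ∫⁻ y, ‖φ.normed volume y‖ₑ = 1 := by
  rw [← ofReal_integral_norm_eq_lintegral_enorm φ.integrable_normed]
  simp_rw [Real.norm_of_nonneg (φ.nonneg_normed _)]
  rw [φ.integral_normed, ENNReal.ofReal_one]

/-- Young's inequality for the convolution with a kernel of mass one. -/
lemma lintegral_rpow_lintegral_normed_mul_le {n : ℕ} (φ : ContDiffBump (0 : Spc n))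
    {F : Spc n → ℝ≥0∞} (hF : AEMeasurable F volume) {q : ℝ} (hq : 1 ≤ q) :
    ∫⁻ x, (∫⁻ y, ‖φ.normed volume (x - y)‖ₑ * F y) ^ q ≤ ∫⁻ y, F y ^ q := by
  have hq0 : 0 < q := by linarith
  have hη : Continuous (φ.normed (volume : Measure (Spc n))) := φ.continuous_normed
  have jensen : ∀ x, (∫⁻ y, ‖φ.normed volume (x - y)‖ₑ * F y) ^ q ≤
      ∫⁻ y, ‖φ.normed volume (x - y)‖ₑ * F y ^ q := by
    intro x
    have hk : Measurable fun y => ‖φ.normed volume (x - y)‖ₑ :=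
      (hη.comp (continuous_const.sub continuous_id)).enorm.measurable
    have hsplit := ENNReal.lintegral_mul_norm_pow_le (μ := volume) hk.aemeasurable
      (hk.aemeasurable.mul (hF.pow_const q)) (p := 1 - 1 / q) (q := 1 / q)
      (by rw [sub_nonneg, div_le_one hq0]; exact hq) (by positivity) (by ring)
    rw [lintegral_sub_left_eq_self (fun y => ‖φ.normed volume y‖ₑ) x, lintegral_enorm_normed,
      ENNReal.one_rpow, one_mul, one_div, ENNReal.le_rpow_inv_iff hq0] at hsplit
    refine le_trans (le_of_eq ?_) hsplit
    congr 2
    funext y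
    rw [Pi.mul_apply, ENNReal.mul_rpow_of_nonneg _ _ (by positivity), ← ENNReal.rpow_mul,
      mul_inv_cancel₀ hq0.ne', ENNReal.rpow_one, ← mul_assoc,
      ← ENNReal.rpow_add_of_nonneg _ _ (by rw [sub_nonneg]; exact inv_le_one_of_one_le₀ hq)
        (by positivity)]
    simp
  refine (lintegral_mono jensen).trans_eq ?_
  rw [lintegral_lintegral_swap]
  · refine lintegral_congr fun y => ?_
    have hk : Measurable fun x => ‖φ.normed volume (x - y)‖ₑ :=
      (hη.comp (continuous_id.sub continuous_const)).enorm.measurable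
    rw [lintegral_mul_const _ hk, lintegral_sub_right_eq_self (fun y => ‖φ.normed volume y‖ₑ) y,
      lintegral_enorm_normed, one_mul]
  · refine AEMeasurable.mul ?_ (hF.pow_const q).comp_snd
    exact (hη.comp (continuous_fst.sub continuous_snd)).enorm.measurable.aemeasurable

/-- Inside the ball, the gradient of the mollification is the mollification of the weak gradient. -/
lemma enorm_fderiv_mollify_le {n : ℕ} (φ : ContDiffBump (0 : Spc n)) {x₀ : Spc n} {ρ : ℝ}
    {u : Spc n → ℝ} {Du : Spc n → Spc n} (hu : IntegrableOn u (Metric.ball x₀ ρ))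
    (hDu : IntegrableOn Du (Metric.ball x₀ ρ)) (hw : IsWeakGradOn x₀ ρ u Du)
    {x : Spc n} (hx : x ∈ Metric.ball x₀ (ρ - φ.rOut)) :
    ‖fderiv ℝ (mollify φ ((Metric.ball x₀ ρ).indicator u)) x‖ₑ ≤
      ∫⁻ y, ‖φ.normed volume (x - y)‖ₑ * ‖(Metric.ball x₀ ρ).indicator Du y‖ₑ := by
  set B := Metric.ball x₀ ρ with hB
  set η := φ.normed (volume : Measure (Spc n)) with hη
  have hηc : Continuous η := φ.continuous_normed
  have hηs : HasCompactSupport η := φ.hasCompactSupport_normed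
  have hηd : ContDiff ℝ (⊤ : ℕ∞) η := φ.contDiff_normed
  have huI : Integrable (B.indicator u) := (integrable_indicator_iff measurableSet_ball).2 hu
  have hDuI : Integrable (B.indicator Du) := (integrable_indicator_iff measurableSet_ball).2 hDu
  set ψ : Spc n → ℝ := fun y => η (x - y) with hψ
  have hψd : ContDiff ℝ (⊤ : ℕ∞) ψ := hηd.comp (contDiff_const.sub contDiff_id)
  have hsub : Function.support ψ ⊆ Metric.closedBall x φ.rOut := by
    intro y hy
    have h1 : x - y ∈ tsupport η := subset_tsupport _ hy
    rw [hη, φ.tsupport_normed_eq, mem_closedBall_zero_iff] at h1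
    rw [mem_closedBall_iff_norm, norm_sub_rev]
    exact h1
  have hψs : HasCompactSupport ψ :=
    HasCompactSupport.of_support_subset_isCompact (isCompact_closedBall x φ.rOut) hsub
  have hψt : tsupport ψ ⊆ B := by
    refine (closure_minimal hsub Metric.isClosed_closedBall).trans ?_
    refine Metric.closedBall_subset_ball' ?_
    have := Metric.mem_ball.1 hx
    linarith
  have hψfd : ∀ y e, fderiv ℝ ψ y e = -(fderiv ℝ η (x - y) e) := by
    intro y e
    have h1 : HasFDerivAt (fun y : Spc n => x - y) (-ContinuousLinearMap.id ℝ (Spc n)) y :=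
      (hasFDerivAt_id y).const_sub x
    have h2 : HasFDerivAt η (fderiv ℝ η (x - y)) (x - y) :=
      (hηd.differentiable (by simp) (x - y)).hasFDerivAt
    have h12 : HasFDerivAt ψ ((fderiv ℝ η (x - y)).comp (-ContinuousLinearMap.id ℝ (Spc n))) y :=
      h2.comp y h1
    rw [h12.fderiv]
    simp
  set G : Spc n := ∫ y, η (x - y) • B.indicator Du y with hG
  have hGint : Integrable (fun y => η (x - y) • B.indicator Du y) := by
    obtain ⟨M, hM⟩ := hηs.exists_bound_of_continuous hηc
    exact hDuI.bdd_smul M (hψd.continuous.aestronglyMeasurable)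
      (Filter.Eventually.of_forall fun y => hM _)
  have hder := hηs.hasFDerivAt_convolution_left (ContinuousLinearMap.lsmul ℝ ℝ)
    (μ := volume) (g := B.indicator u) (hηd.of_le (by simp)) huI.locallyIntegrable x
  have happ : ∀ i, fderiv ℝ (mollify φ (B.indicator u)) x (EuclideanSpace.single i 1) = G i := by
    intro i
    have hex := (hηs.fderiv ℝ).convolutionExists_left
      ((ContinuousLinearMap.lsmul ℝ ℝ).precompL (Spc n)) (μ := volume)
      (hηd.continuous_fderiv (by simp)) huI.locallyIntegrable x
    rw [mollify, hder.fderiv, convolution_eq_swap,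
      ContinuousLinearMap.integral_apply hex.integrable_swap]
    have h3 := hw ψ hψd hψs hψt i
    simp_rw [hψfd] at h3
    rw [← hB] at h3
    have h4 : ∀ y, (((ContinuousLinearMap.lsmul ℝ ℝ).precompL (Spc n)) (fderiv ℝ η (x - y))
        (B.indicator u y)) (EuclideanSpace.single i 1)
        = B.indicator (fun y => - (u y * -(fderiv ℝ η (x - y) (EuclideanSpace.single i 1)))) y := by
      intro y
      by_cases hy : y ∈ B
      · simp [hy, mul_comm]
      · simp [hy]
    simp_rw [h4]
    rw [integral_indicator measurableSet_ball, integral_neg, h3, neg_neg]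
    have h5 : G i = ∫ y, (η (x - y) • B.indicator Du y) i :=
      ((EuclideanSpace.proj (𝕜 := ℝ) i).integral_comp_comm hGint).symm
    rw [h5, ← integral_indicator (s := B) measurableSet_ball]
    refine integral_congr_ae (Filter.Eventually.of_forall fun y => ?_)
    by_cases hy : y ∈ B
    · simp [hy, mul_comm, hψ]
    · simp [hy]
  have hnorm : ‖fderiv ℝ (mollify φ (B.indicator u)) x‖ ≤ ‖G‖ := by
    refine ContinuousLinearMap.opNorm_le_bound _ (norm_nonneg _) fun e => ?_
    have he : fderiv ℝ (mollify φ (B.indicator u)) x e = inner ℝ G e := by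
      conv_lhs => rw [← (EuclideanSpace.basisFun (Fin n) ℝ).sum_repr e]
      rw [map_sum, PiLp.inner_apply]
      refine Finset.sum_congr rfl fun i _ => ?_
      rw [map_smul, EuclideanSpace.basisFun_apply, happ]
      simp
    rw [he]
    exact norm_inner_le_norm _ _
  calc _ ≤ ‖G‖ₑ := enorm_le_iff_norm_le.2 hnorm
    _ ≤ ∫⁻ y, ‖η (x - y) • B.indicator Du y‖ₑ := enorm_integral_le_lintegral_enorm _
    _ = _ := by simp_rw [enorm_smul]

lemma aemeasurable_lintegral_normed_mul {n : ℕ} (φ : ContDiffBump (0 : Spc n))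
    {F : Spc n → ℝ≥0∞} (hF : AEMeasurable F volume) :
    AEMeasurable (fun x => ∫⁻ y, ‖φ.normed volume (x - y)‖ₑ * F y) volume := by
  have hη : Continuous (φ.normed (volume : Measure (Spc n))) := φ.continuous_normed
  refine AEMeasurable.lintegral_prod_right'
    (f := fun z : Spc n × Spc n => ‖φ.normed volume (z.1 - z.2)‖ₑ * F z.2) ?_
  exact (hη.comp (continuous_fst.sub continuous_snd)).enorm.measurable.aemeasurable.mul hF.comp_snd

lemma lintegral_rpow_mul_le {α : Type*} [MeasurableSpace α] {μ : Measure α} {f g : α → ℝ≥0∞}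
    (hf : AEMeasurable f μ) (hg : AEMeasurable g μ) {p q : ℝ} (hq : 1 ≤ q) :
    ∫⁻ x, f x ^ (p * (1 - 1 / q)) * g x ∂μ ≤
      (∫⁻ x, f x ^ p ∂μ) ^ (1 - 1 / q) * (∫⁻ x, g x ^ q ∂μ) ^ (1 / q) := by
  have hq0 : 0 < q := by linarith
  have h := ENNReal.lintegral_mul_norm_pow_le (μ := μ) (hf.pow_const p) (hg.pow_const q)
    (p := 1 - 1 / q) (q := 1 / q)
    (by rw [sub_nonneg, div_le_one hq0]; exact hq) (by positivity) (by ring)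
  simpa only [← ENNReal.rpow_mul, mul_one_div_cancel hq0.ne', ENNReal.rpow_one] using h

lemma lintegral_enorm_indicator_rpow {α E : Type*} [MeasurableSpace α] [NormedAddCommGroup E]
    {μ : Measure α} {s : Set α} (hs : MeasurableSet s) (f : α → E) {p : ℝ} (hp : 0 < p) :
    ∫⁻ x, ‖s.indicator f x‖ₑ ^ p ∂μ = eLpNorm f (ENNReal.ofReal p) (μ.restrict s) ^ p := by
  rw [← eLpNorm_indicator_eq_eLpNorm_restrict hs,
    eLpNorm_eq_lintegral_rpow_enorm_toReal (by simpa using hp) ENNReal.ofReal_ne_top,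
    ENNReal.toReal_ofReal hp.le, ← ENNReal.rpow_mul, one_div_mul_cancel hp.ne', ENNReal.rpow_one]

/-- The mollified form of the weighted Sobolev inequality. -/
lemma eLpNorm_mollify_le {n : ℕ} {C : ℝ} (hC : 0 < C)
    (hsob : ∀ (x₀ : Spc n) (R : ℝ), 0 < R → ∀ v : Spc n → ℝ, ContDiff ℝ 1 v →
      eLpNorm v (sobolevConj n) (volume.restrict (Metric.ball x₀ R)) ≤
        ENNReal.ofReal C * ∫⁻ y in Metric.ball x₀ R,
          (‖v y‖ₑ / ENNReal.ofReal R + ‖fderiv ℝ v y‖ₑ))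
    {p q : ℝ} (hp : 1 ≤ p) (hq : 1 ≤ q) (φ : ContDiffBump (0 : Spc n)) {x₀ : Spc n} {ρ : ℝ}
    (hφ : φ.rOut ≤ ρ / 2)
    {u : Spc n → ℝ} {Du : Spc n → Spc n} (hu : IntegrableOn u (Metric.ball x₀ ρ))
    (hDu : IntegrableOn Du (Metric.ball x₀ ρ)) (hw : IsWeakGradOn x₀ ρ u Du) :
    eLpNorm (fun x => mollify φ ((Metric.ball x₀ ρ).indicator u) x *
        |mollify φ ((Metric.ball x₀ ρ).indicator u) x| ^ (1 + p * (1 - 1 / q) - 1))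
      (sobolevConj n) (volume.restrict (Metric.ball x₀ (ρ - φ.rOut))) ≤
    ENNReal.ofReal (C * (1 + p) * 2) *
      (eLpNorm u (ENNReal.ofReal p) (volume.restrict (Metric.ball x₀ ρ)) ^ (p * (1 - 1 / q)) *
      (eLpNorm u (ENNReal.ofReal q) (volume.restrict (Metric.ball x₀ ρ)) / ENNReal.ofReal ρ +
        eLpNorm Du (ENNReal.ofReal q) (volume.restrict (Metric.ball x₀ ρ)))) := by
  have hq0 : 0 < q := by linarith
  have hp0 : 0 < p := by linarith
  have hφ0 := φ.rOut_pos
  have hρ : 0 < ρ := by linarith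
  have hq1 : 0 ≤ 1 - 1 / q := by rw [sub_nonneg, div_le_one hq0]; exact hq
  have hq2 : 1 - 1 / q ≤ 1 := by rw [sub_le_self_iff]; positivity
  set σ := p * (1 - 1 / q) with hσ
  have hσ0 : 0 ≤ σ := by positivity
  have hσp : σ ≤ p := by nlinarith
  set B := Metric.ball x₀ ρ with hB
  set w := mollify φ (B.indicator u) with hwdef
  have huI : Integrable (B.indicator u) := (integrable_indicator_iff measurableSet_ball).2 hu
  have hDuI : Integrable (B.indicator Du) := (integrable_indicator_iff measurableSet_ball).2 hDu
  have hwd : ContDiff ℝ 1 w := contDiff_mollify φ huI.locallyIntegrable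
  have hγ : (1 : ℝ) ≤ 1 + σ := by linarith
  have hvd : ContDiff ℝ 1 (fun x => w x * |w x| ^ (1 + σ - 1)) :=
    (contDiff_mul_abs_rpow hγ).comp hwd
  set M : Spc n → ℝ≥0∞ := fun x => ∫⁻ y, ‖φ.normed volume (x - y)‖ₑ * ‖B.indicator u y‖ₑ with hM
  set N : Spc n → ℝ≥0∞ := fun x => ∫⁻ y, ‖φ.normed volume (x - y)‖ₑ * ‖B.indicator Du y‖ₑ with hN
  have hue : AEMeasurable (fun y => ‖B.indicator u y‖ₑ) := huI.aestronglyMeasurable.enorm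
  have hDue : AEMeasurable (fun y => ‖B.indicator Du y‖ₑ) := hDuI.aestronglyMeasurable.enorm
  have hMm : AEMeasurable M := aemeasurable_lintegral_normed_mul φ hue
  have hNm : AEMeasurable N := aemeasurable_lintegral_normed_mul φ hDue
  have hwM : ∀ x, ‖w x‖ₑ ≤ M x := enorm_mollify_le φ _
  refine (hsob x₀ (ρ - φ.rOut) (by linarith) _ hvd).trans ?_
  rw [show C * (1 + p) * 2 = C * ((1 + p) * 2) by ring, ENNReal.ofReal_mul hC.le, mul_assoc]
  gcongr
  have hpt : ∀ x ∈ Metric.ball x₀ (ρ - φ.rOut),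
      ‖w x * |w x| ^ (1 + σ - 1)‖ₑ / ENNReal.ofReal (ρ - φ.rOut) +
        ‖fderiv ℝ (fun x => w x * |w x| ^ (1 + σ - 1)) x‖ₑ ≤
      ENNReal.ofReal ((1 + p) * 2) *
        (M x ^ σ * M x * (ENNReal.ofReal ρ)⁻¹ + M x ^ σ * N x) := by
    intro x hx
    have h1 : ‖w x * |w x| ^ (1 + σ - 1)‖ₑ ≤ M x ^ σ * M x := by
      rw [enorm_mul_abs_rpow hγ, add_comm, ENNReal.rpow_add_of_nonneg _ _ hσ0 zero_le_one,
        ENNReal.rpow_one]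
      gcongr <;> exact hwM x
    have h2 : (ENNReal.ofReal (ρ - φ.rOut))⁻¹ ≤ ENNReal.ofReal ((1 + p) * 2) *
        (ENNReal.ofReal ρ)⁻¹ := by
      rw [← ENNReal.ofReal_inv_of_pos hρ, ← ENNReal.ofReal_inv_of_pos (by linarith),
        ← ENNReal.ofReal_mul (by positivity)]
      refine ENNReal.ofReal_le_ofReal ?_
      rw [← div_eq_mul_inv, inv_le_comm₀ (by linarith) (by positivity), inv_div,
        div_le_iff₀ (by positivity)]
      nlinarith
    have hfd : fderiv ℝ (fun x => w x * |w x| ^ (1 + σ - 1)) x =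
        ((1 + σ) * |w x| ^ (1 + σ - 1)) • fderiv ℝ w x :=
      ((hasDerivAt_mul_abs_rpow hγ (w x)).comp_hasFDerivAt x
        (hwd.differentiable (by simp) x).hasFDerivAt).fderiv
    have h3 : ‖fderiv ℝ (fun x => w x * |w x| ^ (1 + σ - 1)) x‖ₑ ≤
        ENNReal.ofReal ((1 + p) * 2) * (M x ^ σ * N x) := by
      rw [hfd, enorm_smul, enorm_mul, mul_assoc, add_sub_cancel_left]
      gcongr
      · rw [Real.enorm_eq_ofReal (by linarith)]
        exact ENNReal.ofReal_le_ofReal (by linarith)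
      · rw [Real.enorm_eq_ofReal (by positivity),
          ← ENNReal.ofReal_rpow_of_nonneg (abs_nonneg _) hσ0, ← Real.enorm_eq_ofReal_abs]
        gcongr
        exact hwM x
      · exact enorm_fderiv_mollify_le φ hu hDu hw hx
    rw [mul_add, div_eq_mul_inv]
    refine add_le_add ?_ h3
    calc _ ≤ (M x ^ σ * M x) * (ENNReal.ofReal ((1 + p) * 2) * (ENNReal.ofReal ρ)⁻¹) := by gcongr
      _ = _ := by ring
  refine (setLIntegral_mono' measurableSet_ball hpt).trans ?_
  refine (setLIntegral_le_lintegral _ _).trans ?_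
  rw [lintegral_const_mul' _ _ ENNReal.ofReal_ne_top]
  gcongr
  have hσm : AEMeasurable (fun x => M x ^ σ * M x) := (hMm.pow_const σ).mul hMm
  rw [lintegral_add_left' (hσm.mul_const _), lintegral_mul_const'' _ hσm, mul_add, div_eq_mul_inv,
    ← mul_assoc]
  have hA : (∫⁻ x, M x ^ p) ^ (1 - 1 / q) ≤
      eLpNorm u (ENNReal.ofReal p) (volume.restrict B) ^ σ := by
    rw [hσ, ENNReal.rpow_mul, ← lintegral_enorm_indicator_rpow measurableSet_ball u hp0]
    exact ENNReal.rpow_le_rpow (lintegral_rpow_lintegral_normed_mul_le φ hue hp) hq1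
  have hroot : ∀ {a b : ℝ≥0∞}, a ≤ b ^ q → a ^ (1 / q) ≤ b := by
    intro a b h
    rwa [one_div, ENNReal.rpow_inv_le_iff hq0]
  refine add_le_add ?_ ?_
  · gcongr
    refine (lintegral_rpow_mul_le hMm hMm hq).trans (mul_le_mul' hA (hroot ?_))
    rw [← lintegral_enorm_indicator_rpow measurableSet_ball u hq0]
    exact lintegral_rpow_lintegral_normed_mul_le φ hue hq
  · refine (lintegral_rpow_mul_le hMm hNm hq).trans (mul_le_mul' hA (hroot ?_))
    rw [← lintegral_enorm_indicator_rpow measurableSet_ball Du hq0]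
    exact lintegral_rpow_lintegral_normed_mul_le φ hDue hq

/-- Weighted Sobolev inequality on a ball: the chain rule applied to a power of `u`, followed by
Hölder's inequality. -/
lemma exists_eLpNorm_rpow_le {n : ℕ} (hn : 1 ≤ n) : ∃ C : ℝ, 0 < C ∧
    ∀ (p q : ℝ), 1 ≤ p → 1 ≤ q → ∀ (x₀ : Spc n) (ρ : ℝ), 0 < ρ →
    ∀ (u : Spc n → ℝ) (Du : Spc n → Spc n), IntegrableOn u (Metric.ball x₀ ρ) →
    IntegrableOn Du (Metric.ball x₀ ρ) → IsWeakGradOn x₀ ρ u Du →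
    eLpNorm u (sobolevConj n * ENNReal.ofReal (1 + p * (1 - 1 / q)))
        (volume.restrict (Metric.ball x₀ ρ)) ^ (1 + p * (1 - 1 / q)) ≤
    ENNReal.ofReal (C * (1 + p)) *
      (eLpNorm u (ENNReal.ofReal p) (volume.restrict (Metric.ball x₀ ρ)) ^ (p * (1 - 1 / q)) *
      (eLpNorm u (ENNReal.ofReal q) (volume.restrict (Metric.ball x₀ ρ)) / ENNReal.ofReal ρ +
        eLpNorm Du (ENNReal.ofReal q) (volume.restrict (Metric.ball x₀ ρ)))) := by
  obtain ⟨C, hC, hsob⟩ := exists_eLpNorm_ball_le hn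
  refine ⟨C * 2, by positivity, fun p q hp hq x₀ ρ hρ u Du hu hDu hw => ?_⟩
  have hq1 : 0 ≤ 1 - 1 / q := by rw [sub_nonneg, div_le_one (by linarith)]; exact hq
  have hσ0 : 0 ≤ p * (1 - 1 / q) := by positivity
  set γ := 1 + p * (1 - 1 / q) with hγdef
  have hγ : 1 ≤ γ := by linarith
  set B := Metric.ball x₀ ρ with hB
  have huI : Integrable (B.indicator u) := (integrable_indicator_iff measurableSet_ball).2 hu
  let φ : ℕ → ContDiffBump (0 : Spc n) := fun k =>
    ⟨ρ / 4 / (k + 1), ρ / 2 / (k + 1), by positivity, by gcongr; norm_num⟩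
  have hφle : ∀ k, (φ k).rOut ≤ ρ / 2 := fun k =>
    div_le_self (by positivity) (by linarith [(Nat.cast_nonneg k : (0 : ℝ) ≤ k)])
  have hφ0 : Filter.Tendsto (fun k => (φ k).rOut) Filter.atTop (nhds 0) :=
    tendsto_const_nhds.div_atTop
      (Filter.tendsto_atTop_add_const_right _ _ tendsto_natCast_atTop_atTop)
  have hlim := ContDiffBump.ae_convolution_tendsto_right_of_locallyIntegrable (μ := volume)
    (φ := φ) (K := 2) hφ0
    (Filter.Eventually.of_forall fun k => by
      change ρ / 2 / (k + 1) ≤ 2 * (ρ / 4 / (k + 1))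
      apply le_of_eq; ring)
    huI.locallyIntegrable
  let w : ℕ → Spc n → ℝ := fun k => mollify (φ k) (B.indicator u)
  have hwd : ∀ k, ContDiff ℝ 1 (w k) := fun k => contDiff_mollify (φ k) huI.locallyIntegrable
  let v : ℕ → Spc n → ℝ := fun k =>
    (Metric.ball x₀ (ρ - (φ k).rOut)).indicator fun x => w k x * |w k x| ^ (γ - 1)
  have hvm : ∀ k, AEStronglyMeasurable (v k) volume := fun k =>
    (((contDiff_mul_abs_rpow hγ).comp (hwd k)).continuous.aestronglyMeasurable).indicator
      measurableSet_ball
  have hvlim : ∀ᵐ x, Filter.Tendsto (fun k => v k x) Filter.atTop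
      (nhds (B.indicator (fun x => u x * |u x| ^ (γ - 1)) x)) := by
    filter_upwards [hlim] with x hx
    by_cases hxB : x ∈ B
    · rw [indicator_of_mem hxB] at hx ⊢
      have h1 : Filter.Tendsto (fun k => w k x * |w k x| ^ (γ - 1)) Filter.atTop
          (nhds (u x * |u x| ^ (γ - 1))) :=
        ((contDiff_mul_abs_rpow hγ).continuous.tendsto (u x)).comp hx
      refine h1.congr' ?_
      have h2 : 0 < ρ - dist x x₀ := sub_pos.2 hxB
      filter_upwards [hφ0.eventually (gt_mem_nhds h2)] with k hk
      have h3 : x ∈ Metric.ball x₀ (ρ - (φ k).rOut) := by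
        rw [Metric.mem_ball]
        linarith
      exact (indicator_of_mem h3 fun x => w k x * |w k x| ^ (γ - 1)).symm
    · rw [indicator_of_notMem hxB]
      refine tendsto_const_nhds.congr fun k => (indicator_of_notMem (fun h => hxB ?_) _).symm
      exact Metric.ball_subset_ball (by linarith [(φ k).rOut_pos]) h
  have hfatou := Lp.eLpNorm_lim_le_liminf_eLpNorm (p := sobolevConj n) hvm _ hvlim
  rw [eLpNorm_indicator_eq_eLpNorm_restrict measurableSet_ball] at hfatou
  have hpow : eLpNorm (fun x => u x * |u x| ^ (γ - 1)) (sobolevConj n) (volume.restrict B) =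
      eLpNorm u (sobolevConj n * ENNReal.ofReal γ) (volume.restrict B) ^ γ := by
    rw [← eLpNorm_norm_rpow u (by linarith)]
    refine eLpNorm_congr_enorm_ae (Filter.Eventually.of_forall fun x => ?_)
    rw [enorm_mul_abs_rpow hγ, Real.norm_eq_abs,
      Real.enorm_eq_ofReal (r := |u x| ^ γ) (by positivity),
      ← ENNReal.ofReal_rpow_of_nonneg (abs_nonneg _) (by linarith), ← Real.enorm_eq_ofReal_abs]
  rw [hpow] at hfatou
  refine hfatou.trans (Filter.liminf_le_of_le (by isBoundedDefault) fun b hb => ?_)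
  obtain ⟨k, hk⟩ := hb.exists
  refine hk.trans ?_
  rw [eLpNorm_indicator_eq_eLpNorm_restrict measurableSet_ball,
    show C * 2 * (1 + p) = C * (1 + p) * 2 by ring]
  exact eLpNorm_mollify_le hC hsob hp hq (φ k) (hφle k) hu hDu hw

lemma sobolevConj_mul_ofReal (n : ℕ) {γ : ℝ} (hγ : 0 < γ) :
    sobolevConj n * ENNReal.ofReal γ = (ENNReal.ofReal ((1 - 1 / n) / γ))⁻¹ := by
  rw [ENNReal.ofReal_div_of_pos hγ, ENNReal.inv_div (by simp) (by simp [hγ]), sobolevConj, mul_comm,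
    ← div_eq_mul_inv]

/-- The normalised Lebesgue measure on a ball. -/
def ballMeasure {n : ℕ} (x₀ : Spc n) (ρ : ℝ) : Measure (Spc n) :=
  (volume (Metric.ball x₀ ρ))⁻¹ • volume.restrict (Metric.ball x₀ ρ)

lemma setAverage_ball_eq {n : ℕ} (x₀ : Spc n) (ρ : ℝ) (f : Spc n → ℝ) :
    ⨍ x in Metric.ball x₀ ρ, f x = ∫ x, f x ∂(ballMeasure x₀ ρ) := by
  rw [average, ballMeasure, Measure.restrict_apply_univ]

lemma isProbabilityMeasure_ballMeasure {n : ℕ} (x₀ : Spc n) {ρ : ℝ} (hρ : 0 < ρ) :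
    IsProbabilityMeasure (ballMeasure x₀ ρ) :=
  ⟨by
    rw [ballMeasure, Measure.smul_apply, Measure.restrict_apply_univ, smul_eq_mul]
    exact ENNReal.inv_mul_cancel (Metric.measure_ball_pos _ _ hρ).ne' measure_ball_lt_top.ne⟩

lemma eLpNorm_restrict_ball {n : ℕ} {E : Type*} [NormedAddCommGroup E] (x₀ : Spc n) {ρ : ℝ}
    (hρ : 0 < ρ) (f : Spc n → E) {b : ℝ} (hb : 0 ≤ b) :
    eLpNorm f (ENNReal.ofReal b)⁻¹ (volume.restrict (Metric.ball x₀ ρ)) =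
      volume (Metric.ball x₀ ρ) ^ b * eLpNorm f (ENNReal.ofReal b)⁻¹ (ballMeasure x₀ ρ) := by
  have h0 : volume (Metric.ball x₀ ρ) ≠ 0 := (Metric.measure_ball_pos _ _ hρ).ne'
  have h1 : volume (Metric.ball x₀ ρ) ≠ ∞ := measure_ball_lt_top.ne
  rw [ballMeasure, eLpNorm_smul_measure_of_ne_zero (by simpa using h1), one_div, inv_inv,
    ENNReal.toReal_ofReal hb, smul_eq_mul, ← mul_assoc, ENNReal.inv_rpow, ENNReal.mul_inv_cancel,
    one_mul]
  · simp [ENNReal.rpow_eq_zero_iff, h0, h1]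
  · exact ENNReal.rpow_ne_top_of_nonneg hb h1

lemma inv_ofReal_inv {p : ℝ} (hp : 0 < p) : (ENNReal.ofReal (1 / p))⁻¹ = ENNReal.ofReal p := by
  rw [one_div, ENNReal.ofReal_inv_of_pos hp, inv_inv]

/-- Scale-invariant form of the weighted Sobolev inequality; `L^s` exponents are indexed by `1 / s`
to treat `s = ∞` uniformly. -/
lemma exists_eLpNorm_ballMeasure_le {n : ℕ} (hn : 1 ≤ n) : ∃ K : ℝ, 0 < K ∧
    ∀ (p q : ℝ), 1 ≤ p → 1 ≤ q → ∀ (x₀ : Spc n) (ρ : ℝ), 0 < ρ →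
    ∀ (u : Spc n → ℝ) (Du : Spc n → Spc n), IntegrableOn u (Metric.ball x₀ ρ) →
    IntegrableOn Du (Metric.ball x₀ ρ) → IsWeakGradOn x₀ ρ u Du →
    eLpNorm u (ENNReal.ofReal ((1 - 1 / n) / (1 + p * (1 - 1 / q))))⁻¹ (ballMeasure x₀ ρ) ^
        (1 + p * (1 - 1 / q)) ≤
    ENNReal.ofReal (K * (1 + p) * ρ) *
      (eLpNorm u (ENNReal.ofReal p) (ballMeasure x₀ ρ) ^ (p * (1 - 1 / q)) *
      (eLpNorm u (ENNReal.ofReal q) (ballMeasure x₀ ρ) / ENNReal.ofReal ρ +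
        eLpNorm Du (ENNReal.ofReal q) (ballMeasure x₀ ρ))) := by
  obtain ⟨C, hC, hkey⟩ := exists_eLpNorm_rpow_le hn
  have hn0 : (0 : ℝ) < n := by exact_mod_cast hn
  set ω := volume (Metric.ball (0 : Spc n) 1) with hω
  have hω0 : ω ≠ 0 := (Metric.measure_ball_pos _ _ one_pos).ne'
  have hω1 : ω ≠ ∞ := measure_ball_lt_top.ne
  have hκ : ω ^ (1 / n : ℝ) ≠ ∞ := ENNReal.rpow_ne_top_of_nonneg (by positivity) hω1
  refine ⟨C * (ω ^ (1 / n : ℝ)).toReal, mul_pos hC (ENNReal.toReal_pos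
    (by simp [ENNReal.rpow_eq_zero_iff, hω0, hω1]) hκ), ?_⟩
  intro p q hp hq x₀ ρ hρ u Du hu hDu hw
  have hp0 : 0 < p := by linarith
  have hq0 : 0 < q := by linarith
  have hq1 : 0 ≤ 1 - 1 / q := by rw [sub_nonneg, div_le_one hq0]; exact hq
  have hm : (0 : ℝ) ≤ 1 - 1 / n := by
    rw [sub_nonneg, div_le_one hn0]; exact_mod_cast hn
  have hσ0 : 0 ≤ p * (1 - 1 / q) := by positivity
  have h := hkey p q hp hq x₀ ρ hρ u Du hu hDu hw
  set γ := 1 + p * (1 - 1 / q) with hγdef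
  have hγ : 0 < γ := by linarith
  set V := volume (Metric.ball x₀ ρ) with hV
  have hV0 : V ≠ 0 := (Metric.measure_ball_pos _ _ hρ).ne'
  have hV1 : V ≠ ∞ := measure_ball_lt_top.ne
  have hVn : V ^ (1 / n : ℝ) = ENNReal.ofReal ρ * ENNReal.ofReal (ω ^ (1 / n : ℝ)).toReal := by
    rw [hV, Measure.addHaar_ball_of_pos _ _ hρ, finrank_euclideanSpace_fin,
      ENNReal.mul_rpow_of_nonneg _ _ (by positivity), ENNReal.ofReal_toReal hκ,
      ← Real.rpow_natCast, ENNReal.ofReal_rpow_of_nonneg (by positivity) (by positivity),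
      ← Real.rpow_mul hρ.le, mul_one_div_cancel hn0.ne', Real.rpow_one]
  rw [sobolevConj_mul_ofReal n hγ, ← inv_ofReal_inv hp0, ← inv_ofReal_inv hq0,
    eLpNorm_restrict_ball _ hρ _ (by positivity), eLpNorm_restrict_ball _ hρ _ (by positivity),
    eLpNorm_restrict_ball _ hρ _ (by positivity), eLpNorm_restrict_ball _ hρ _ (by positivity),
    inv_ofReal_inv hp0, inv_ofReal_inv hq0, ← hV, ENNReal.mul_rpow_of_nonneg _ _ hγ.le,
    ENNReal.mul_rpow_of_nonneg _ _ hσ0, ← ENNReal.rpow_mul, ← ENNReal.rpow_mul,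
    div_mul_cancel₀ _ hγ.ne', mul_div_assoc (V ^ (1 / q)), ← mul_add,
    show 1 / p * (p * (1 - 1 / q)) = 1 - 1 / q by field_simp] at h
  have hVpow : V ^ (1 - 1 / q) * V ^ (1 / q) = V ^ (1 - 1 / n : ℝ) * V ^ (1 / n : ℝ) := by
    rw [← ENNReal.rpow_add_of_nonneg _ _ hq1 (by positivity),
      ← ENNReal.rpow_add_of_nonneg _ _ hm (by positivity), sub_add_cancel, sub_add_cancel]
  set S := eLpNorm u (ENNReal.ofReal q) (ballMeasure x₀ ρ) / ENNReal.ofReal ρ +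
    eLpNorm Du (ENNReal.ofReal q) (ballMeasure x₀ ρ)
  set N := eLpNorm u (ENNReal.ofReal p) (ballMeasure x₀ ρ) ^ (p * (1 - 1 / q))
  have hrw : ENNReal.ofReal (C * (1 + p)) * (V ^ (1 - 1 / q) * N * (V ^ (1 / q) * S)) =
      V ^ (1 - 1 / n : ℝ) *
        (ENNReal.ofReal (C * (ω ^ (1 / n : ℝ)).toReal * (1 + p) * ρ) * (N * S)) := by
    rw [show C * (ω ^ (1 / n : ℝ)).toReal * (1 + p) * ρ =
        C * (1 + p) * (ρ * (ω ^ (1 / n : ℝ)).toReal) by ring,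
      ENNReal.ofReal_mul (p := C * (1 + p)) (by positivity), ENNReal.ofReal_mul hρ.le, ← hVn,
      show V ^ (1 - 1 / q) * N * (V ^ (1 / q) * S) = V ^ (1 - 1 / q) * V ^ (1 / q) * (N * S) by
        ring, hVpow]
    ring
  rw [hrw] at h
  exact (ENNReal.mul_le_mul_iff_right (by simp [ENNReal.rpow_eq_zero_iff, hV0, hV1])
    (ENNReal.rpow_ne_top_of_nonneg hm hV1)).1 h

/-- Interpolation between Lebesgue norms. -/
lemma eLpNorm_le_interpolation {α : Type*} [MeasurableSpace α] {μ : Measure α} {f : α → ℝ}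
    (hf : AEStronglyMeasurable f μ) {b₁ b₂ θ : ℝ} (hb₁ : 0 ≤ b₁) (hb₂ : 0 ≤ b₂)
    (hθ : 0 < θ) (hθ' : θ < 1) :
    eLpNorm f (ENNReal.ofReal (θ * b₁ + (1 - θ) * b₂))⁻¹ μ ≤
      eLpNorm f (ENNReal.ofReal b₁)⁻¹ μ ^ θ * eLpNorm f (ENNReal.ofReal b₂)⁻¹ μ ^ (1 - θ) := by
  have hθ1 : 0 < 1 - θ := by linarith
  have hscale : ∀ (b t : ℝ), 0 < t →
      (ENNReal.ofReal (t * b))⁻¹ * ENNReal.ofReal t = (ENNReal.ofReal b)⁻¹ := by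
    intro b t ht
    rw [ENNReal.ofReal_mul ht.le, ENNReal.mul_inv (by simp [ht]) (by simp), mul_comm, ← mul_assoc,
      ENNReal.mul_inv_cancel (by simpa using ht) (by simp), one_mul]
  have hnorm : ∀ (b t : ℝ), 0 < t → eLpNorm (fun x => ‖f x‖ ^ t) (ENNReal.ofReal (t * b))⁻¹ μ =
      eLpNorm f (ENNReal.ofReal b)⁻¹ μ ^ t := by
    intro b t ht
    rw [eLpNorm_norm_rpow f ht, hscale b t ht]
  have hm : ∀ t : ℝ, 0 ≤ t → AEStronglyMeasurable (fun x => ‖f x‖ ^ t) μ := fun t ht =>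
    (Real.continuous_rpow_const ht).comp_aestronglyMeasurable hf.norm
  have hholder : ENNReal.HolderTriple (ENNReal.ofReal (θ * b₁))⁻¹ (ENNReal.ofReal ((1 - θ) * b₂))⁻¹
      (ENNReal.ofReal (θ * b₁ + (1 - θ) * b₂))⁻¹ :=
    ⟨by rw [inv_inv, inv_inv, inv_inv, ENNReal.ofReal_add (by positivity) (by positivity)]⟩
  have h := eLpNorm_smul_le_mul_eLpNorm (hm (1 - θ) hθ1.le) (hm θ hθ.le) (hpqr := hholder)
  rw [hnorm _ _ hθ, hnorm _ _ hθ1] at h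
  refine le_trans (le_of_eq ?_) h
  rw [← eLpNorm_norm]
  congr 1
  funext x
  rw [Pi.smul_apply', smul_eq_mul, ← Real.rpow_add_of_nonneg (norm_nonneg _) hθ.le hθ1.le,
    add_sub_cancel, Real.rpow_one]

lemma eLpNorm_inv_ofReal_mono {α : Type*} [MeasurableSpace α] {ν : Measure α}
    [IsProbabilityMeasure ν] {u : α → ℝ} (hu : AEStronglyMeasurable u ν) {b₁ b₂ : ℝ}
    (h : b₂ ≤ b₁) : eLpNorm u (ENNReal.ofReal b₁)⁻¹ ν ≤ eLpNorm u (ENNReal.ofReal b₂)⁻¹ ν :=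
  eLpNorm_le_eLpNorm_of_exponent_le (ENNReal.inv_le_inv.2 (ENNReal.ofReal_le_ofReal h)) hu

/-- Absorbing the `L^p` norm in the interpolation estimate, for `r < p`. -/
lemma le_of_log_interpolation {a b s t θ γ x y z k : ℝ} (hγ : 1 ≤ γ) (hb : b < a) (ha : a < s)
    (hθ : θ * t + (1 - θ) * s ≤ a) (hD : γ * b = t + (γ - 1) * a)
    (hx : x ≤ (s - a) / (s - b) * y + (1 - (s - a) / (s - b)) * z)
    (hy : γ * y ≤ k + (γ - 1) * x) (hz : z ≤ x) : x ≤ θ * k + (1 - θ) * z := by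
  have hsb : 0 < s - b := by linarith
  have hx' : (s - b) * x ≤ (s - a) * y + (a - b) * z := by
    have h := mul_le_mul_of_nonneg_left hx hsb.le
    have e : (s - b) * ((s - a) / (s - b) * y + (1 - (s - a) / (s - b)) * z) =
        (s - a) * y + (a - b) * z := by
      field_simp
      ring
    linarith
  have hst : 0 < s - t := by nlinarith
  have h1 : γ * ((s - b) * x) ≤ γ * ((s - a) * y + (a - b) * z) := by gcongr
  have h2 : (s - a) * (γ * y) ≤ (s - a) * (k + (γ - 1) * x) := by
    have : 0 ≤ s - a := by linarith
    gcongr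
  have h3 : (s - t) * (x - z) ≤ (s - a) * (k - z) := by
    have e : t = γ * b - (γ - 1) * a := by linarith
    subst e
    nlinarith
  have hkz : 0 ≤ k - z := by
    have h4 : 0 ≤ (s - a) * (k - z) := le_trans (mul_nonneg hst.le (sub_nonneg.2 hz)) h3
    exact nonneg_of_mul_nonneg_right h4 (by linarith)
  have h5 : (s - a) * (k - z) ≤ (s - t) * (θ * (k - z)) := by
    rw [← mul_assoc]
    exact mul_le_mul_of_nonneg_right (by linarith) hkz
  have h6 : x - z ≤ θ * (k - z) := le_of_mul_le_mul_left (h3.trans h5) hst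
  linarith

/-- From the weighted Sobolev estimate to the Gagliardo–Nirenberg estimate, on a probability
space. -/
lemma toReal_eLpNorm_le_of_sobolev {α : Type*} [MeasurableSpace α] {ν : Measure α}
    [IsProbabilityMeasure ν] {u : α → ℝ} {p q r θ d T : ℝ} (hp : 1 ≤ p) (hq : 1 ≤ q) (hr : 1 ≤ r)
    (hθ : 0 < θ) (hθ' : θ < 1) (hd : 0 ≤ d) (hd1 : d ≤ 1) (hT : 0 < T)
    (hpqr : θ * (1 / q - d) + (1 - θ) * (1 / r) ≤ 1 / p)
    (hup : MemLp u (ENNReal.ofReal p) ν) (hur : MemLp u (ENNReal.ofReal r) ν)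
    (hu0 : ¬ u =ᵐ[ν] 0)
    (hS : ∀ k : ℝ, 1 ≤ k → k ≤ p →
      eLpNorm u (ENNReal.ofReal ((1 - d) / (1 + k * (1 - 1 / q))))⁻¹ ν ^ (1 + k * (1 - 1 / q)) ≤
        ENNReal.ofReal T * eLpNorm u (ENNReal.ofReal k) ν ^ (k * (1 - 1 / q))) :
    (eLpNorm u (ENNReal.ofReal p) ν).toReal ≤
      T ^ θ * (eLpNorm u (ENNReal.ofReal r) ν).toReal ^ (1 - θ) := by
  have hp0 : 0 < p := by linarith
  have hq0 : 0 < q := by linarith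
  have hr0 : 0 < r := by linarith
  have hum := hup.aestronglyMeasurable
  have hq1 : 0 ≤ 1 - 1 / q := by rw [sub_nonneg, div_le_one hq0]; exact hq
  have hne0 : ∀ b : ℝ, eLpNorm u (ENNReal.ofReal b)⁻¹ ν ≠ 0 := fun b h =>
    hu0 ((eLpNorm_eq_zero_iff hum (by simp)).1 h)
  have hNp := hup.eLpNorm_ne_top
  have hNr := hur.eLpNorm_ne_top
  rw [← inv_ofReal_inv hp0] at hNp ⊢
  rw [← inv_ofReal_inv hr0] at hNr ⊢
  rcases le_or_gt (1 / r) (1 / p) with hrp | hrp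
  · set κ := max (1 / q - d) (1 / p) with hκ
    have hκ0 : 0 < κ := lt_of_lt_of_le (by positivity) (le_max_right _ _)
    have hκ1 : κ ≤ 1 := max_le (by linarith) (by rw [div_le_one hp0]; exact hp)
    have hκp : 1 / p ≤ κ := le_max_right _ _
    have hk1 : 1 ≤ 1 / κ := by rw [le_div_iff₀ hκ0]; linarith
    have hkp : 1 / κ ≤ p := by rw [div_le_comm₀ hκ0 hp0]; exact hκp
    have h := hS (1 / κ) hk1 hkp
    set σ := 1 / κ * (1 - 1 / q) with hσ
    have hσ0 : 0 ≤ σ := by positivity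
    rw [← inv_ofReal_inv (by positivity : 0 < 1 / κ), one_div_one_div] at h
    have hNκ : eLpNorm u (ENNReal.ofReal κ)⁻¹ ν ≠ ∞ :=
      ne_top_of_le_ne_top hNp (eLpNorm_inv_ofReal_mono hum hκp)
    have hle : (1 - d) / (1 + σ) ≤ κ := by
      rw [div_le_iff₀ (by positivity), mul_add, hσ, ← mul_assoc, mul_one_div_cancel hκ0.ne']
      have := le_max_left (1 / q - d) (1 / p)
      linarith
    have h1 : eLpNorm u (ENNReal.ofReal κ)⁻¹ ν ≤ ENNReal.ofReal T := by
      have h2 := (ENNReal.rpow_le_rpow (eLpNorm_inv_ofReal_mono hum hle)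
        (by positivity : 0 ≤ 1 + σ)).trans h
      rw [ENNReal.rpow_add _ _ (hne0 κ) hNκ, ENNReal.rpow_one] at h2
      exact (ENNReal.mul_le_mul_iff_left (by simp [ENNReal.rpow_eq_zero_iff, hne0, hNκ])
        (ENNReal.rpow_ne_top_of_nonneg hσ0 hNκ)).1 h2
    have h3 : θ * κ + (1 - θ) * (1 / r) ≤ 1 / p := by
      rcases max_cases (1 / q - d) (1 / p) with ⟨h, -⟩ | ⟨h, -⟩
      · rw [hκ, h]; exact hpqr
      · rw [hκ, h]; nlinarith
    have h4 := (eLpNorm_inv_ofReal_mono hum h3).trans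
      (eLpNorm_le_interpolation hum hκ0.le (by positivity) hθ hθ')
    have h5 : eLpNorm u (ENNReal.ofReal (1 / p))⁻¹ ν ≤
        ENNReal.ofReal T ^ θ * eLpNorm u (ENNReal.ofReal (1 / r))⁻¹ ν ^ (1 - θ) :=
      h4.trans (by gcongr)
    have h6 := ENNReal.toReal_mono (ENNReal.mul_ne_top
      (ENNReal.rpow_ne_top_of_nonneg hθ.le ENNReal.ofReal_ne_top)
      (ENNReal.rpow_ne_top_of_nonneg (by linarith) hNr)) h5
    rwa [ENNReal.toReal_mul, ← ENNReal.toReal_rpow, ← ENNReal.toReal_rpow,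
      ENNReal.toReal_ofReal hT.le] at h6
  · have h := hS p hp le_rfl
    rw [← inv_ofReal_inv hp0] at h
    set σ := p * (1 - 1 / q) with hσ
    have hσ0 : 0 ≤ σ := by positivity
    set b := (1 - d) / (1 + σ) with hb
    have hb0 : 0 ≤ b := div_nonneg (by linarith) (by positivity)
    have ht : 1 / q - d < 1 / p := by nlinarith
    have hσp : σ * (1 / p) = 1 - 1 / q := by rw [hσ]; field_simp
    have hγb : (1 + σ) * b = 1 - d := by rw [hb]; field_simp
    have hba : b < 1 / p := by nlinarith
    set s := 1 / r with hs
    set a := 1 / p with ha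
    set lam := (s - a) / (s - b) with hlam
    have hsb : 0 < s - b := by linarith
    have hlam0 : 0 < lam := div_pos (by linarith) hsb
    have hlam1 : lam < 1 := by rw [hlam, div_lt_one hsb]; linarith
    have hNb : eLpNorm u (ENNReal.ofReal b)⁻¹ ν ≠ ∞ := by
      intro htop
      rw [htop, ENNReal.top_rpow_of_pos (by positivity), top_le_iff] at h
      exact ENNReal.mul_ne_top ENNReal.ofReal_ne_top
        (ENNReal.rpow_ne_top_of_nonneg hσ0 hNp) h
    have hint := eLpNorm_le_interpolation hum hb0 (by positivity : 0 ≤ s) hlam0 hlam1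
    rw [show lam * b + (1 - lam) * s = a by rw [hlam]; field_simp; ring] at hint
    have hz := ENNReal.toReal_mono hNp (eLpNorm_inv_ofReal_mono hum hrp.le)
    have hint' := ENNReal.toReal_mono (ENNReal.mul_ne_top
      (ENNReal.rpow_ne_top_of_nonneg hlam0.le hNb)
      (ENNReal.rpow_ne_top_of_nonneg (by linarith) hNr)) hint
    have h' := ENNReal.toReal_mono (ENNReal.mul_ne_top ENNReal.ofReal_ne_top
      (ENNReal.rpow_ne_top_of_nonneg hσ0 hNp)) h
    rw [ENNReal.toReal_mul, ← ENNReal.toReal_rpow, ← ENNReal.toReal_rpow] at hint' h'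
    rw [ENNReal.toReal_ofReal hT.le] at h'
    have hx0 := ENNReal.toReal_pos (hne0 a) hNp
    have hy0 := ENNReal.toReal_pos (hne0 b) hNb
    have hz0 := ENNReal.toReal_pos (hne0 s) hNr
    set x := (eLpNorm u (ENNReal.ofReal a)⁻¹ ν).toReal
    set y := (eLpNorm u (ENNReal.ofReal b)⁻¹ ν).toReal
    set z := (eLpNorm u (ENNReal.ofReal s)⁻¹ ν).toReal
    have e1 := Real.log_le_log hx0 hint'
    have e2 := Real.log_le_log (by positivity) h'
    rw [Real.log_mul (by positivity) (by positivity), Real.log_rpow hy0, Real.log_rpow hz0] at e1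
    rw [Real.log_mul (by positivity) (by positivity), Real.log_rpow hy0, Real.log_rpow hx0] at e2
    rw [← Real.log_le_log_iff hx0 (by positivity), Real.log_mul (by positivity) (by positivity),
      Real.log_rpow hT, Real.log_rpow hz0]
    refine le_of_log_interpolation (a := a) (b := b) (s := s) (t := 1 / q - d) (γ := 1 + σ)
      (y := Real.log y) (by linarith) hba hrp hpqr (by rw [hγb]; linarith) e1 ?_
      (Real.log_le_log hz0 hz)
    rwa [add_sub_cancel_left]

lemma integral_norm_rpow_eq {α E : Type*} [MeasurableSpace α] [NormedAddCommGroup E]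
    {ν : Measure α} {f : α → E} {p : ℝ} (hp : 0 < p) (hf : MemLp f (ENNReal.ofReal p) ν) :
    ∫ x, ‖f x‖ ^ p ∂ν = (eLpNorm f (ENNReal.ofReal p) ν).toReal ^ p := by
  have h0 : 0 ≤ ∫ x, ‖f x‖ ^ p ∂ν := integral_nonneg fun x => by positivity
  rw [hf.eLpNorm_eq_integral_rpow_norm (by simpa using hp) ENNReal.ofReal_ne_top,
    ENNReal.toReal_ofReal hp.le, ENNReal.toReal_ofReal (by positivity), ← Real.rpow_mul h0,
    inv_mul_cancel₀ hp.ne', Real.rpow_one]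

lemma integrable_norm_rpow_of_memLp {α E : Type*} [MeasurableSpace α] [NormedAddCommGroup E]
    {ν : Measure α} {f : α → E} {p : ℝ} (hp : 0 < p) (hf : MemLp f (ENNReal.ofReal p) ν) :
    Integrable (fun x => ‖f x‖ ^ p) ν := by
  have h := hf.integrable_norm_rpow (by simpa using hp) ENNReal.ofReal_ne_top
  rwa [ENNReal.toReal_ofReal hp.le] at h

/-- Gagliardo–Nirenberg inequality on balls: let `1 ≤ p, q, r < ∞` and `θ ∈ (0,1)` satisfy
`−n/p ≤ θ(1 − n/q) − (1 − θ) n/r`. Then there exists `c = c(n, p)` such that for any ball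
`B_ρ(x₀) ⊂ ℝ^n`, `ρ > 0`, and any `u ∈ W^{1,q}(B_ρ(x₀))` with `u ∈ L^r(B_ρ(x₀))`:
`⨍ |u|^p/ρ^p ≤ c [⨍ (|u|^q/ρ^q + |Du|^q)]^{θp/q} [⨍ |u|^r/ρ^r]^{(1−θ)p/r}`. -/
theorem gagliardo_nirenberg (n : ℕ) (p : ℝ) (hn : 1 ≤ n) (hp : 1 ≤ p) :
    ∃ c : ℝ, 0 < c ∧ ∀ (q r θ : ℝ), 1 ≤ q → 1 ≤ r → θ ∈ Ioo (0 : ℝ) 1 →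
      -(n / p) ≤ θ * (1 - n / q) - (1 - θ) * (n / r) →
      ∀ (x₀ : Spc n) (ρ : ℝ), 0 < ρ →
      ∀ (u : Spc n → ℝ) (Du : Spc n → Spc n),
        MemLp u (ENNReal.ofReal q) (volume.restrict (Metric.ball x₀ ρ)) →
        MemLp Du (ENNReal.ofReal q) (volume.restrict (Metric.ball x₀ ρ)) →
        MemLp u (ENNReal.ofReal r) (volume.restrict (Metric.ball x₀ ρ)) →
        IsWeakGradOn x₀ ρ u Du →
        ⨍ x in Metric.ball x₀ ρ, |u x| ^ p / ρ ^ p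
          ≤ c * (⨍ x in Metric.ball x₀ ρ, (|u x| ^ q / ρ ^ q + ‖Du x‖ ^ q)) ^ (θ * p / q)
              * (⨍ x in Metric.ball x₀ ρ, |u x| ^ r / ρ ^ r) ^ ((1 - θ) * p / r) := by
  obtain ⟨K, hK, hsob⟩ := exists_eLpNorm_ballMeasure_le hn
  set A := max (2 * (K * (1 + p))) 1 with hA
  have hA1 : 1 ≤ A := le_max_right _ _
  refine ⟨A ^ p, by positivity, ?_⟩
  intro q r θ hq hr hθ hpqr x₀ ρ hρ u Du huq hDuq hur hw
  obtain ⟨hθ0, hθ1⟩ := hθ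
  have hn0 : (0 : ℝ) < n := by exact_mod_cast hn
  have hp0 : 0 < p := by linarith
  have hq0 : 0 < q := by linarith
  have hr0 : 0 < r := by linarith
  simp only [setAverage_ball_eq]
  have := isProbabilityMeasure_ballMeasure x₀ hρ
  have hone : ∀ {e : ℝ}, 1 ≤ e → 1 ≤ ENNReal.ofReal e := fun he => ENNReal.one_le_ofReal.2 he
  have : IsFiniteMeasure (volume.restrict (Metric.ball x₀ ρ)) :=
    isFiniteMeasure_restrict.2 measure_ball_lt_top.ne
  have huI : IntegrableOn u (Metric.ball x₀ ρ) := huq.integrable (hone hq)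
  have hDuI : IntegrableOn Du (Metric.ball x₀ ρ) := hDuq.integrable (hone hq)
  have hVinv : (volume (Metric.ball x₀ ρ))⁻¹ ≠ ∞ :=
    ENNReal.inv_ne_top.2 (Metric.measure_ball_pos _ _ hρ).ne'
  replace huq : MemLp u (ENNReal.ofReal q) (ballMeasure x₀ ρ) := huq.smul_measure hVinv
  replace hDuq : MemLp Du (ENNReal.ofReal q) (ballMeasure x₀ ρ) := hDuq.smul_measure hVinv
  replace hur : MemLp u (ENNReal.ofReal r) (ballMeasure x₀ ρ) := hur.smul_measure hVinv
  set ν := ballMeasure x₀ ρ with hν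
  have hQ : ∫ x, (|u x| ^ q / ρ ^ q + ‖Du x‖ ^ q) ∂ν =
      ((eLpNorm u (ENNReal.ofReal q) ν).toReal / ρ) ^ q +
        (eLpNorm Du (ENNReal.ofReal q) ν).toReal ^ q := by
    simp_rw [← Real.norm_eq_abs]
    rw [integral_add ((integrable_norm_rpow_of_memLp hq0 huq).div_const _)
      (integrable_norm_rpow_of_memLp hq0 hDuq), integral_div, integral_norm_rpow_eq hq0 huq,
      integral_norm_rpow_eq hq0 hDuq, Real.div_rpow ENNReal.toReal_nonneg hρ.le]
  have hR : ∫ x, |u x| ^ r / ρ ^ r ∂ν = ((eLpNorm u (ENNReal.ofReal r) ν).toReal / ρ) ^ r := by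
    simp_rw [← Real.norm_eq_abs]
    rw [integral_div, integral_norm_rpow_eq hr0 hur, Real.div_rpow ENNReal.toReal_nonneg hρ.le]
  rw [hQ, hR]
  set Nq := (eLpNorm u (ENNReal.ofReal q) ν).toReal with hNq
  set Dq := (eLpNorm Du (ENNReal.ofReal q) ν).toReal with hDq
  set Nr := (eLpNorm u (ENNReal.ofReal r) ν).toReal with hNr
  have hNq0 : 0 ≤ Nq := ENNReal.toReal_nonneg
  have hDq0 : 0 ≤ Dq := ENNReal.toReal_nonneg
  have hNr0 : 0 ≤ Nr := ENNReal.toReal_nonneg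
  have hrhs : 0 ≤ A ^ p * ((Nq / ρ) ^ q + Dq ^ q) ^ (θ * p / q) *
      ((Nr / ρ) ^ r) ^ ((1 - θ) * p / r) := by positivity
  by_cases hup : MemLp u (ENNReal.ofReal p) ν
  swap
  · rw [integral_undef]
    · exact hrhs
    · intro hint
      refine hup ((integrable_norm_rpow_iff huq.aestronglyMeasurable (by simpa using hp0)
        ENNReal.ofReal_ne_top).1 ?_)
      rw [ENNReal.toReal_ofReal hp0.le]
      refine (hint.mul_const (ρ ^ p)).congr (Filter.Eventually.of_forall fun x => ?_)
      simp only [Real.norm_eq_abs]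
      exact div_mul_cancel₀ _ (by positivity)
  by_cases hu0 : u =ᵐ[ν] 0
  · refine le_trans (le_of_eq ?_) hrhs
    refine integral_eq_zero_of_ae ?_
    filter_upwards [hu0] with x hx
    simp [hx, Real.zero_rpow hp0.ne']
  have hPint : ∫ x, |u x| ^ p / ρ ^ p ∂ν = ((eLpNorm u (ENNReal.ofReal p) ν).toReal / ρ) ^ p := by
    simp_rw [← Real.norm_eq_abs]
    rw [integral_div, integral_norm_rpow_eq hp0 hup, Real.div_rpow ENNReal.toReal_nonneg hρ.le]
  rw [hPint]
  set W := ((Nq / ρ) ^ q + Dq ^ q) ^ (1 / q) with hW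
  have hroot : ∀ {a b : ℝ}, 0 ≤ a → a ^ q ≤ b → a ≤ b ^ (1 / q) := by
    intro a b ha hab
    calc a = (a ^ q) ^ (1 / q) := by
          rw [← Real.rpow_mul ha, mul_one_div_cancel hq0.ne', Real.rpow_one]
      _ ≤ b ^ (1 / q) := by gcongr
  have hNqW : Nq / ρ ≤ W := hroot (by positivity) (le_add_of_nonneg_right (by positivity))
  have hDqW : Dq ≤ W := hroot hDq0 (le_add_of_nonneg_left (by positivity))
  have hNqpos : 0 < Nq := ENNReal.toReal_pos
    (fun h => hu0 ((eLpNorm_eq_zero_iff huq.aestronglyMeasurable (by simpa using hq0)).1 h))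
    huq.eLpNorm_ne_top
  have hW0 : 0 < W := lt_of_lt_of_le (by positivity) hNqW
  have hcond : θ * (1 / q - 1 / n) + (1 - θ) * (1 / r) ≤ 1 / p := by
    have h1 : θ * (1 / q - 1 / n) + (1 - θ) * (1 / r) =
        -(θ * (1 - n / q) - (1 - θ) * (n / r)) / n := by
      field_simp
      ring
    have h2 : 1 / p = n / p / n := by field_simp
    rw [h1, h2]
    gcongr
    linarith
  have hmain := toReal_eLpNorm_le_of_sobolev (T := A * ρ * W) (d := 1 / n) hp hq hr hθ0 hθ1
    (by positivity) (by rw [div_le_one hn0]; exact_mod_cast hn) (by positivity) hcond hup hur hu0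
    (by
      intro k hk hkp
      refine (hsob k q hk hq x₀ ρ hρ u Du huI hDuI hw).trans ?_
      rw [← hν, mul_left_comm, mul_comm]
      gcongr
      rw [← ENNReal.ofReal_toReal huq.eLpNorm_ne_top, ← ENNReal.ofReal_toReal hDuq.eLpNorm_ne_top,
        ← ENNReal.ofReal_div_of_pos hρ, ← ENNReal.ofReal_add (by positivity) hDq0,
        ← ENNReal.ofReal_mul (by positivity)]
      refine ENNReal.ofReal_le_ofReal ?_
      calc K * (1 + k) * ρ * (Nq / ρ + Dq) ≤ K * (1 + p) * ρ * (W + W) := by gcongr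
        _ = 2 * (K * (1 + p)) * ρ * W := by ring
        _ ≤ A * ρ * W := by gcongr; exact le_max_left _ _)
  set Np := (eLpNorm u (ENNReal.ofReal p) ν).toReal with hNp
  have hNp0 : 0 ≤ Np := ENNReal.toReal_nonneg
  have hθ1' : 0 ≤ 1 - θ := by linarith
  have hdiv : Np / ρ ≤ (A * W) ^ θ * (Nr / ρ) ^ (1 - θ) := by
    rw [div_le_iff₀ hρ]
    refine hmain.trans (le_of_eq ?_)
    rw [show A * ρ * W = A * W * ρ by ring, Real.mul_rpow (by positivity) hρ.le,
      Real.div_rpow hNr0 hρ.le]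
    have hρθ : ρ ^ θ * ρ ^ (1 - θ) = ρ := by
      rw [← Real.rpow_add hρ, add_sub_cancel, Real.rpow_one]
    have hρ' : 0 < ρ ^ (1 - θ) := by positivity
    rw [← hNr]
    field_simp
    rw [mul_right_comm, hρθ, mul_comm]
  calc (Np / ρ) ^ p ≤ ((A * W) ^ θ * (Nr / ρ) ^ (1 - θ)) ^ p := by gcongr
    _ = A ^ (θ * p) * W ^ (θ * p) * (Nr / ρ) ^ ((1 - θ) * p) := by
      rw [Real.mul_rpow (by positivity) (by positivity), ← Real.rpow_mul (by positivity),
        ← Real.rpow_mul (by positivity), Real.mul_rpow (by positivity) hW0.le]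
    _ ≤ A ^ p * W ^ (θ * p) * (Nr / ρ) ^ ((1 - θ) * p) := by
      gcongr
      nlinarith
    _ = _ := by
      rw [hW, ← Real.rpow_mul (by positivity), ← Real.rpow_mul (by positivity)]
      congr 2
      · congr 1
        ring
      · field_simp
end
end

section
/- Vitali-type covering property for the intrinsic cylinders: Let max{2n/(n+2),1} < p < 2n/(n−2)_+ and let u, Q_{4R}, λ_o and the scaling factors μ_{z;r}^{(λ)} be as in the construction below. There exists a constant ĉ = ĉ(n,p) ≥ 20 such that whenever λ ≥ λ_o and 𝓕 is any collection of cylinders of the form Q_{4r}^{(μ_{z;r}^{(λ)})}(z) with z ∈ Q_{2R} and radius r ∈ (0, R/ĉ], then there exists a countable subfamily 𝓖 ⊆ 𝓕 of pairwise disjoint cylinders such that ∪_{Q ∈ 𝓕} Q ⊆ ∪_{Q ∈ 𝓖} Q̂, where for Q = Q_{4r}^{(μ_{z;r}^{(λ)})}(z) the enlarged cylinder is Q̂ := Q_{ĉ r}^{(μ_{z;r}^{(λ)})}(z). -/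
open MeasureTheory Set
open scoped ENNReal

noncomputable section

variable {n N : ℕ}

/-- The scaled parabolic cylinder `Q_ρ^{(μ)}(z₀)`:
`B_ρ(x₀) × (t₀ − μ^{p−2}ρ^p, t₀ + μ^{p−2}ρ^p)` if `p < 2`, and
`B_{μ^{(2−p)/p}ρ}(x₀) × (t₀ − ρ^p, t₀ + ρ^p)` if `p ≥ 2`. -/
def parCyl (p μ ρ : ℝ) (z₀ : Spc n × ℝ) : Set (Spc n × ℝ) :=
  if p < 2 then
    Metric.ball z₀.1 ρ ×ˢ Ioo (z₀.2 - μ ^ (p - 2) * ρ ^ p) (z₀.2 + μ ^ (p - 2) * ρ ^ p)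
  else
    Metric.ball z₀.1 (μ ^ ((2 - p) / p) * ρ) ×ˢ Ioo (z₀.2 - ρ ^ p) (z₀.2 + ρ ^ p)

/-- The exponent `β := 2 − p + (𝔭 − 2)(2 + n/p)`, where `𝔭 = max{p, 2}`. -/
def betaEx (n : ℕ) (p : ℝ) : ℝ := 2 - p + (max p 2 - 2) * (2 + (n : ℝ) / p)

/-- The scaling factor `μ̃_{z;ρ}^{(λ)} := inf{μ ∈ [1, ∞) :
(1/|Q_ρ|) ∬_{Q_ρ^{(μ)}(z)} |u|^p/ρ^p ≤ μ^{p−β} λ^p}`. -/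
def mutilde (p lam : ℝ) (u : Spc n × ℝ → Vec N) (z : Spc n × ℝ) (ρ : ℝ) : ℝ :=
  sInf {μ : ℝ | 1 ≤ μ ∧
    (∫ w in parCyl p μ ρ z, ‖u w‖ ^ p / ρ ^ p) / (volume (parCyl p 1 ρ z)).toReal
      ≤ μ ^ (p - betaEx n p) * lam ^ p}

/-- The monotonized scaling factor `μ_{z;ρ}^{(λ)} := max_{r ∈ [ρ, R]} μ̃_{z;r}^{(λ)}`. -/
def muF (p lam R : ℝ) (u : Spc n × ℝ → Vec N) (z : Spc n × ℝ) (ρ : ℝ) : ℝ :=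
  sSup (mutilde p lam u z '' Icc ρ R)

/-- The spatial stretching factor of the cylinder `Q_ρ^{(μ)}`. -/
def spaceFactor (p μ : ℝ) : ℝ := if p < 2 then 1 else μ ^ ((2 - p) / p)

/-- The temporal stretching factor of the cylinder `Q_ρ^{(μ)}`. -/
def timeFactor (p μ : ℝ) : ℝ := if p < 2 then μ ^ (p - 2) else 1

lemma spaceFactor_pos (p : ℝ) {μ : ℝ} (hμ : 0 < μ) : 0 < spaceFactor p μ := by
  unfold spaceFactor; split_ifs <;> positivity

lemma timeFactor_pos (p : ℝ) {μ : ℝ} (hμ : 0 < μ) : 0 < timeFactor p μ := by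
  unfold timeFactor; split_ifs <;> positivity

lemma spaceFactor_antitone (p : ℝ) {μ ν : ℝ} (hμ : 0 < μ) (h : μ ≤ ν) :
    spaceFactor p ν ≤ spaceFactor p μ := by
  unfold spaceFactor
  split_ifs with hp
  · exact le_rfl
  · exact Real.rpow_le_rpow_of_nonpos hμ h
      (div_nonpos_of_nonpos_of_nonneg (by linarith) (by linarith))

lemma timeFactor_antitone (p : ℝ) {μ ν : ℝ} (hμ : 0 < μ) (h : μ ≤ ν) :
    timeFactor p ν ≤ timeFactor p μ := by
  unfold timeFactor
  split_ifs with hp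
  · exact Real.rpow_le_rpow_of_nonpos hμ h (by linarith)
  · exact le_rfl

lemma spaceFactor_le_mul (p : ℝ) {μ c : ℝ} (hμ : 0 < μ) (hc : 1 ≤ c) :
    spaceFactor p μ ≤ spaceFactor p (c * μ) * c := by
  have hc0 : 0 < c := by linarith
  unfold spaceFactor
  split_ifs with hp
  · linarith
  · rw [Real.mul_rpow hc0.le hμ.le, mul_right_comm, ← Real.rpow_add_one hc0.ne']
    refine le_mul_of_one_le_left (by positivity) (Real.one_le_rpow hc ?_)
    have : (2 - p) / p + 1 = 2 / p := by
      have : p ≠ 0 := by linarith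
      field_simp; ring
    rw [this]
    exact div_nonneg (by norm_num) (by linarith)

lemma timeFactor_le_mul {p μ c : ℝ} (hp : 1 ≤ p) (hμ : 0 < μ) (hc : 1 ≤ c) :
    timeFactor p μ ≤ timeFactor p (c * μ) * c ^ p := by
  have hc0 : 0 < c := by linarith
  unfold timeFactor
  split_ifs with h2
  · rw [Real.mul_rpow hc0.le hμ.le, mul_right_comm, ← Real.rpow_add hc0]
    exact le_mul_of_one_le_left (by positivity) (Real.one_le_rpow hc (by linarith))
  · rw [one_mul]
    exact Real.one_le_rpow hc (by linarith)

lemma mem_parCyl {p μ ρ : ℝ} {z w : Spc n × ℝ} :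
    w ∈ parCyl p μ ρ z ↔
      dist w.1 z.1 < spaceFactor p μ * ρ ∧ |w.2 - z.2| < timeFactor p μ * ρ ^ p := by
  unfold parCyl spaceFactor timeFactor
  split_ifs with hp
  all_goals
    simp only [mem_prod, Metric.mem_ball, mem_Ioo, abs_lt, one_mul]
    refine and_congr_right fun _ => ⟨?_, ?_⟩ <;> rintro ⟨h₁, h₂⟩ <;> constructor <;> linarith

lemma mem_parCyl_comm {p μ ρ : ℝ} {z w : Spc n × ℝ} :
    w ∈ parCyl p μ ρ z ↔ z ∈ parCyl p μ ρ w := by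
  rw [mem_parCyl, mem_parCyl, dist_comm, abs_sub_comm]

lemma mem_parCyl_self (p : ℝ) {μ ρ : ℝ} (hμ : 0 < μ) (hρ : 0 < ρ) (z : Spc n × ℝ) :
    z ∈ parCyl p μ ρ z := by
  rw [mem_parCyl, dist_self, sub_self, abs_zero]
  exact ⟨mul_pos (spaceFactor_pos p hμ) hρ, mul_pos (timeFactor_pos p hμ) (by positivity)⟩

lemma isOpen_parCyl (p μ ρ : ℝ) (z : Spc n × ℝ) : IsOpen (parCyl p μ ρ z) := by
  unfold parCyl
  split_ifs <;> exact Metric.isOpen_ball.prod isOpen_Ioo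

/-- The triangle inequality for the quasi-metric whose balls are the cylinders `Q_ρ^{(μ)}`. -/
lemma mem_parCyl_trans {p μ a b : ℝ} (hp : 1 ≤ p) (hμ : 0 < μ) (ha : 0 ≤ a) (hb : 0 ≤ b)
    {w y z : Spc n × ℝ} (h₁ : w ∈ parCyl p μ a y) (h₂ : y ∈ parCyl p μ b z) :
    w ∈ parCyl p μ (a + b) z := by
  rw [mem_parCyl] at *
  constructor
  · linarith [dist_triangle w.1 y.1 z.1]
  · have h := mul_le_mul_of_nonneg_left (Real.add_rpow_le_rpow_add ha hb hp)
      (timeFactor_pos p hμ).le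
    have := abs_sub_le w.2 y.2 z.2
    linarith

lemma parCyl_subset_of_radius_le {p μ a b : ℝ} (hp : 0 ≤ p) (hμ : 0 < μ) (ha : 0 ≤ a)
    (h : a ≤ b) (z : Spc n × ℝ) : parCyl p μ a z ⊆ parCyl p μ b z := by
  intro w hw
  rw [mem_parCyl] at *
  exact ⟨hw.1.trans_le (mul_le_mul_of_nonneg_left h (spaceFactor_pos p hμ).le),
    hw.2.trans_le (mul_le_mul_of_nonneg_left (Real.rpow_le_rpow ha h hp) (timeFactor_pos p hμ).le)⟩

lemma parCyl_subset_of_scaling_le {p μ ν ρ : ℝ} (hμ : 0 < μ) (h : μ ≤ ν) (hρ : 0 ≤ ρ)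
    (z : Spc n × ℝ) : parCyl p ν ρ z ⊆ parCyl p μ ρ z := by
  intro w hw
  rw [mem_parCyl] at *
  exact ⟨hw.1.trans_le (mul_le_mul_of_nonneg_right (spaceFactor_antitone p hμ h) hρ),
    hw.2.trans_le (mul_le_mul_of_nonneg_right (timeFactor_antitone p hμ h) (by positivity))⟩

lemma parCyl_subset_mul {p μ c ρ : ℝ} (hp : 1 ≤ p) (hμ : 0 < μ) (hc : 1 ≤ c) (hρ : 0 ≤ ρ)
    (z : Spc n × ℝ) : parCyl p μ ρ z ⊆ parCyl p (c * μ) (c * ρ) z := by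
  intro w hw
  rw [mem_parCyl] at *
  refine ⟨hw.1.trans_le ?_, hw.2.trans_le ?_⟩
  · rw [← mul_assoc]
    exact mul_le_mul_of_nonneg_right (spaceFactor_le_mul p hμ hc) hρ
  · rw [Real.mul_rpow (by linarith) hρ, ← mul_assoc]
    exact mul_le_mul_of_nonneg_right (timeFactor_le_mul hp hμ hc) (by positivity)

lemma parCyl_subset_parCyl_four_mul {p μ ρ R : ℝ} (hp : 1 ≤ p) (hμ : 1 ≤ μ) (hρ : 0 < ρ)
    (hρR : ρ ≤ R) {z zhat : Spc n × ℝ} (hz : z ∈ parCyl p 1 (2 * R) zhat) :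
    parCyl p μ ρ z ⊆ parCyl p 1 (4 * R) zhat := fun _ hw =>
  parCyl_subset_of_radius_le (by linarith) one_pos (by linarith) (by linarith) zhat
    (mem_parCyl_trans hp one_pos hρ.le (by linarith)
      (parCyl_subset_of_scaling_le one_pos hμ hρ.le z hw) hz)

/-- The volume of the standard cylinder of radius one. -/
def unitCylVol (n : ℕ) : ℝ := (volume (Metric.ball (0 : Spc n) 1)).toReal * 2

lemma unitCylVol_pos (n : ℕ) : 0 < unitCylVol n :=
  mul_pos (ENNReal.toReal_pos (Metric.measure_ball_pos _ _ one_pos).ne' measure_ball_lt_top.ne)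
    two_pos

lemma volume_parCyl_one {p ρ : ℝ} (hρ : 0 < ρ) (z : Spc n × ℝ) :
    (volume (parCyl p 1 ρ z)).toReal = unitCylVol n * ρ ^ ((n : ℝ) + p) := by
  have h : parCyl p 1 ρ z = Metric.ball z.1 ρ ×ˢ Ioo (z.2 - ρ ^ p) (z.2 + ρ ^ p) := by
    unfold parCyl; simp
  rw [h, Measure.volume_eq_prod, Measure.prod_prod, ENNReal.toReal_mul,
    Measure.addHaar_ball_of_pos _ _ hρ, Real.volume_Ioo, ENNReal.toReal_mul,
    ENNReal.toReal_ofReal (by positivity), finrank_euclideanSpace_fin,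
    ENNReal.toReal_ofReal (by have := Real.rpow_pos_of_pos hρ p; linarith), Real.rpow_add hρ,
    Real.rpow_natCast, unitCylVol]
  ring

lemma mutilde_eq {p lam ρ : ℝ} (u : Spc n × ℝ → Vec N) (z : Spc n × ℝ) (hρ : 0 < ρ) :
    mutilde p lam u z ρ = sInf {μ : ℝ | 1 ≤ μ ∧ ∫ w in parCyl p μ ρ z, ‖u w‖ ^ p ≤
      μ ^ (p - betaEx n p) * lam ^ p * (unitCylVol n * ρ ^ ((n : ℝ) + 2 * p))} := by
  have hκ := unitCylVol_pos n
  unfold mutilde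
  congr 1
  ext μ
  simp only [mem_ofPred_eq]
  refine and_congr_right fun _ => ?_
  rw [volume_parCyl_one hρ, integral_div, div_div, div_le_iff₀ (by positivity),
    show (n : ℝ) + 2 * p = p + (n + p) by ring, Real.rpow_add hρ p]
  ring_nf

lemma sub_betaEx_pos {p : ℝ} (hp1 : 1 < p)
    (hp' : (n : ℝ) ≤ 2 ∨ p < 2 * (n : ℝ) / ((n : ℝ) - 2)) : 0 < p - betaEx n p := by
  unfold betaEx
  rcases le_total p 2 with h | h
  · rw [max_eq_right h]; linarith
  · rw [max_eq_left h]
    have hp0 : 0 < p := by linarith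
    have hkey : p * ((n : ℝ) - 2) < 2 * n ∨ (n : ℝ) = 0 := by
      rcases Nat.eq_zero_or_pos n with h0 | h0
      · right; simp [h0]
      left
      have h0' : (0 : ℝ) < n := by exact_mod_cast h0
      by_cases hn : (n : ℝ) ≤ 2
      · nlinarith
      · rcases hp' with h' | h'
        · exact absurd h' hn
        · exact (lt_div_iff₀ (by linarith)).1 h'
    have e : p - (2 - p + (p - 2) * (2 + (n : ℝ) / p)) = (2 * n - p * (n - 2)) / p := by
      field_simp; ring
    rw [e]
    refine div_pos ?_ hp0
    rcases hkey with h' | h'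
    · linarith
    · rw [h']; linarith

section Scaling

variable {p lam R : ℝ} {u : Spc n × ℝ → Vec N} {z zhat : Spc n × ℝ}

lemma setIntegral_parCyl_mono {A B : Set (Spc n × ℝ)} (hAB : A ⊆ B)
    (hu : IntegrableOn (fun w => ‖u w‖ ^ p) B) :
    ∫ w in A, ‖u w‖ ^ p ≤ ∫ w in B, ‖u w‖ ^ p :=
  setIntegral_mono_set hu (ae_of_all _ fun _ => by positivity) hAB.eventuallyLE

/-- A uniform admissible scaling factor for all radii in `[ρ, R]`. -/
lemma exists_admissible (hp1 : 1 < p) (hq : 0 < p - betaEx n p) (hlam : 1 ≤ lam)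
    (hu : IntegrableOn (fun w => ‖u w‖ ^ p) (parCyl p 1 (4 * R) zhat))
    (hz : z ∈ parCyl p 1 (2 * R) zhat) {ρ : ℝ} (hρ : 0 < ρ) :
    ∃ μ : ℝ, 1 ≤ μ ∧ ∀ r ∈ Icc ρ R, ∫ w in parCyl p μ r z, ‖u w‖ ^ p ≤
      μ ^ (p - betaEx n p) * lam ^ p * (unitCylVol n * r ^ ((n : ℝ) + 2 * p)) := by
  have hκ := unitCylVol_pos n
  set I := ∫ w in parCyl p 1 (4 * R) zhat, ‖u w‖ ^ p
  have hI : 0 ≤ I := integral_nonneg fun _ => by positivity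
  set W := unitCylVol n * ρ ^ ((n : ℝ) + 2 * p)
  have hW : 0 < W := by positivity
  have hD : 0 ≤ I / W := by positivity
  set μ := (I / W + 1) ^ (p - betaEx n p)⁻¹
  have hμ : 1 ≤ μ := Real.one_le_rpow (by linarith) (by positivity)
  have hμq : μ ^ (p - betaEx n p) = I / W + 1 := by
    rw [← Real.rpow_mul (by linarith), inv_mul_cancel₀ hq.ne', Real.rpow_one]
  refine ⟨μ, hμ, fun r hr => ?_⟩
  have hr0 : 0 < r := hρ.trans_le hr.1
  have hlamp : 1 ≤ lam ^ p := Real.one_le_rpow hlam (by linarith)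
  calc ∫ w in parCyl p μ r z, ‖u w‖ ^ p ≤ I :=
        setIntegral_parCyl_mono (parCyl_subset_parCyl_four_mul hp1.le hμ hr0 hr.2 hz) hu
    _ = I / W * 1 * W := by field_simp
    _ ≤ (I / W + 1) * lam ^ p * (unitCylVol n * r ^ ((n : ℝ) + 2 * p)) := by
        have : ρ ^ ((n : ℝ) + 2 * p) ≤ r ^ ((n : ℝ) + 2 * p) :=
          Real.rpow_le_rpow hρ.le hr.1 (by positivity)
        gcongr
        · linarith
        · exact mul_le_mul_of_nonneg_left this hκ.le
    _ = _ := by rw [hμq]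

lemma one_le_mutilde (hp1 : 1 < p) (hq : 0 < p - betaEx n p) (hlam : 1 ≤ lam)
    (hu : IntegrableOn (fun w => ‖u w‖ ^ p) (parCyl p 1 (4 * R) zhat))
    (hz : z ∈ parCyl p 1 (2 * R) zhat) {r : ℝ} (hr : 0 < r) (hrR : r ≤ R) :
    1 ≤ mutilde p lam u z r := by
  obtain ⟨μ, hμ, h⟩ := exists_admissible hp1 hq hlam hu hz hr
  rw [mutilde_eq u z hr]
  exact le_csInf ⟨μ, hμ, h r ⟨le_rfl, hrR⟩⟩ fun _ hb => hb.1

lemma lt_integral_of_lt_mutilde {r μ : ℝ} (hr : 0 < r) (hμ : 1 ≤ μ)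
    (h : μ < mutilde p lam u z r) :
    μ ^ (p - betaEx n p) * lam ^ p * (unitCylVol n * r ^ ((n : ℝ) + 2 * p)) <
      ∫ w in parCyl p μ r z, ‖u w‖ ^ p := by
  rw [mutilde_eq u z hr] at h
  by_contra! hcon
  exact notMem_of_lt_csInf h ⟨1, fun _ hb => hb.1⟩ ⟨hμ, hcon⟩

lemma integral_le_of_mutilde_lt (hp1 : 1 < p) (hq : 0 < p - betaEx n p) (hlam : 1 ≤ lam)
    (hu : IntegrableOn (fun w => ‖u w‖ ^ p) (parCyl p 1 (4 * R) zhat))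
    (hz : z ∈ parCyl p 1 (2 * R) zhat) {r μ : ℝ} (hr : 0 < r) (hrR : r ≤ R)
    (h : mutilde p lam u z r < μ) :
    ∫ w in parCyl p μ r z, ‖u w‖ ^ p ≤
      μ ^ (p - betaEx n p) * lam ^ p * (unitCylVol n * r ^ ((n : ℝ) + 2 * p)) := by
  have hκ := unitCylVol_pos n
  obtain ⟨ν, hν, hadm⟩ := exists_admissible hp1 hq hlam hu hz hr
  rw [mutilde_eq u z hr] at h
  obtain ⟨μ', ⟨h1, hμ'⟩, hlt⟩ := exists_lt_of_csInf_lt (by exact ⟨ν, hν, hadm r ⟨le_rfl, hrR⟩⟩) h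
  refine (setIntegral_parCyl_mono
    (parCyl_subset_of_scaling_le (by linarith) hlt.le hr.le z)
    (hu.mono_set (parCyl_subset_parCyl_four_mul hp1.le h1 hr hrR hz))).trans (hμ'.trans ?_)
  gcongr

lemma bddAbove_mutilde (hp1 : 1 < p) (hq : 0 < p - betaEx n p) (hlam : 1 ≤ lam)
    (hu : IntegrableOn (fun w => ‖u w‖ ^ p) (parCyl p 1 (4 * R) zhat))
    (hz : z ∈ parCyl p 1 (2 * R) zhat) {ρ : ℝ} (hρ : 0 < ρ) :
    BddAbove (mutilde p lam u z '' Icc ρ R) := by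
  obtain ⟨μ, hμ, h⟩ := exists_admissible hp1 hq hlam hu hz hρ
  refine ⟨μ, ?_⟩
  rintro _ ⟨r, hr, rfl⟩
  rw [mutilde_eq u z (hρ.trans_le hr.1)]
  exact csInf_le ⟨1, fun _ hb => hb.1⟩ ⟨hμ, h r hr⟩

lemma mutilde_le_muF (hp1 : 1 < p) (hq : 0 < p - betaEx n p) (hlam : 1 ≤ lam)
    (hu : IntegrableOn (fun w => ‖u w‖ ^ p) (parCyl p 1 (4 * R) zhat))
    (hz : z ∈ parCyl p 1 (2 * R) zhat) {ρ r : ℝ} (hρ : 0 < ρ) (hr : r ∈ Icc ρ R) :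
    mutilde p lam u z r ≤ muF p lam R u z ρ :=
  le_csSup (bddAbove_mutilde hp1 hq hlam hu hz hρ) (mem_image_of_mem _ hr)

lemma one_le_muF (hp1 : 1 < p) (hq : 0 < p - betaEx n p) (hlam : 1 ≤ lam)
    (hu : IntegrableOn (fun w => ‖u w‖ ^ p) (parCyl p 1 (4 * R) zhat))
    (hz : z ∈ parCyl p 1 (2 * R) zhat) {ρ : ℝ} (hρ : 0 < ρ) (hρR : ρ ≤ R) :
    1 ≤ muF p lam R u z ρ :=
  (one_le_mutilde hp1 hq hlam hu hz hρ hρR).trans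
    (mutilde_le_muF hp1 hq hlam hu hz hρ ⟨le_rfl, hρR⟩)

/-- The constant controlling the ratio of scaling factors of intersecting cylinders. -/
def muRatio (n : ℕ) (p : ℝ) : ℝ := 2 * 104 ^ (((n : ℝ) + 2 * p) / (p - betaEx n p))

lemma two_le_muRatio (hp1 : 1 < p) (hq : 0 < p - betaEx n p) : 2 ≤ muRatio n p := by
  have : (1 : ℝ) ≤ 104 ^ (((n : ℝ) + 2 * p) / (p - betaEx n p)) :=
    Real.one_le_rpow (by norm_num) (by positivity)
  unfold muRatio
  linarith

lemma muRatio_rpow (hq : 0 < p - betaEx n p) :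
    muRatio n p ^ (p - betaEx n p) = 2 ^ (p - betaEx n p) * 104 ^ ((n : ℝ) + 2 * p) := by
  unfold muRatio
  rw [Real.mul_rpow (by norm_num) (by positivity), ← Real.rpow_mul (by norm_num),
    div_mul_cancel₀ _ hq.ne']

/-- Scaling factors of intersecting cylinders with comparable radii are comparable. -/
lemma muF_le_muRatio_mul (hp1 : 1 < p) (hq : 0 < p - betaEx n p) (hlam : 1 ≤ lam) (hR : 0 < R)
    (hu : IntegrableOn (fun w => ‖u w‖ ^ p) (parCyl p 1 (4 * R) zhat))
    (hI : ∫ w in parCyl p 1 (4 * R) zhat, ‖u w‖ ^ p ≤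
      lam ^ p * (unitCylVol n * (4 * R) ^ ((n : ℝ) + 2 * p)))
    {z₁ z₂ y : Spc n × ℝ} (hz₁ : z₁ ∈ parCyl p 1 (2 * R) zhat)
    (hz₂ : z₂ ∈ parCyl p 1 (2 * R) zhat) {r s : ℝ} (hr : 0 < r) (hrR : r ≤ R) (hs : 0 < s)
    (hsR : s ≤ R) (hrs : r ≤ 2 * s)
    (hy₁ : y ∈ parCyl p (muF p lam R u z₁ r) (4 * r) z₁)
    (hy₂ : y ∈ parCyl p (muF p lam R u z₂ s) (4 * s) z₂) :
    muF p lam R u z₂ s ≤ muRatio n p * muF p lam R u z₁ r := by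
  have hκ := unitCylVol_pos n
  have hC := two_le_muRatio hp1 hq
  have hμ₁ := one_le_muF hp1 hq hlam hu hz₁ hr hrR
  set μ₁ := muF p lam R u z₁ r
  set C := muRatio n p
  have hCμ : 2 * μ₁ ≤ C * μ₁ := mul_le_mul_of_nonneg_right hC (by linarith)
  refine csSup_le ((nonempty_Icc.2 hsR).image _) ?_
  rintro _ ⟨σ, hσ, rfl⟩
  by_contra! hlt
  have hσ0 : 0 < σ := hs.trans_le hσ.1
  have hμ₁₂ : μ₁ ≤ muF p lam R u z₂ s :=
    (by linarith : μ₁ ≤ C * μ₁).trans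
      (hlt.le.trans (mutilde_le_muF hp1 hq hlam hu hz₂ hs hσ))
  have hlower := lt_integral_of_lt_mutilde hσ0 (by linarith) hlt
  have hfac : (C * μ₁) ^ (p - betaEx n p) =
      104 ^ ((n : ℝ) + 2 * p) * (2 * μ₁) ^ (p - betaEx n p) := by
    rw [Real.mul_rpow (by linarith) (by linarith), muRatio_rpow hq,
      Real.mul_rpow (by norm_num) (by linarith)]
    ring
  have hμq : 1 ≤ (2 * μ₁) ^ (p - betaEx n p) := Real.one_le_rpow (by linarith) hq.le
  refine hlower.not_ge ?_
  rw [hfac]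
  rcases le_or_gt (26 * σ) R with hσR | hσR
  · have hsub : parCyl p (C * μ₁) σ z₂ ⊆ parCyl p (2 * μ₁) (26 * σ) z₁ := by
      intro w hw
      have h₁ := parCyl_subset_of_scaling_le (by linarith) (by linarith : μ₁ ≤ C * μ₁) hσ0.le z₂ hw
      have h₂ := mem_parCyl_comm.1
        (parCyl_subset_of_scaling_le (by linarith) hμ₁₂ (by linarith) z₂ hy₂)
      have h₃ := mem_parCyl_trans hp1.le (by linarith) (by linarith) (by linarith)
        (mem_parCyl_trans hp1.le (by linarith) hσ0.le (by linarith) h₁ h₂) hy₁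
      have h₄ := parCyl_subset_of_radius_le (by linarith) (by linarith) (by linarith)
        (by linarith [hσ.1] : σ + 4 * s + 4 * r ≤ 13 * σ) z₁ h₃
      have h₅ := parCyl_subset_mul hp1.le (by linarith) one_le_two (by linarith) z₁ h₄
      rwa [show 2 * (13 * σ) = 26 * σ by ring] at h₅
    have hmu : mutilde p lam u z₁ (26 * σ) < 2 * μ₁ :=
      (mutilde_le_muF hp1 hq hlam hu hz₁ hr ⟨by linarith [hσ.1], hσR⟩).trans_lt (by linarith)
    calc ∫ w in parCyl p (C * μ₁) σ z₂, ‖u w‖ ^ p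
        ≤ ∫ w in parCyl p (2 * μ₁) (26 * σ) z₁, ‖u w‖ ^ p :=
          setIntegral_parCyl_mono hsub (hu.mono_set
            (parCyl_subset_parCyl_four_mul hp1.le (by linarith) (by linarith) hσR hz₁))
      _ ≤ (2 * μ₁) ^ (p - betaEx n p) * lam ^ p *
            (unitCylVol n * (26 * σ) ^ ((n : ℝ) + 2 * p)) :=
          integral_le_of_mutilde_lt hp1 hq hlam hu hz₁ (by linarith) hσR hmu
      _ ≤ (2 * μ₁) ^ (p - betaEx n p) * lam ^ p *
            (unitCylVol n * (104 * σ) ^ ((n : ℝ) + 2 * p)) := by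
          gcongr; norm_num
      _ = _ := by rw [Real.mul_rpow (by norm_num) hσ0.le]; ring
  · calc ∫ w in parCyl p (C * μ₁) σ z₂, ‖u w‖ ^ p
        ≤ ∫ w in parCyl p 1 (4 * R) zhat, ‖u w‖ ^ p :=
          setIntegral_parCyl_mono
            (parCyl_subset_parCyl_four_mul hp1.le (by linarith) hσ0 hσ.2 hz₂) hu
      _ ≤ 1 * lam ^ p * (unitCylVol n * (4 * R) ^ ((n : ℝ) + 2 * p)) := by rwa [one_mul]
      _ ≤ (2 * μ₁) ^ (p - betaEx n p) * lam ^ p *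
            (unitCylVol n * (104 * σ) ^ ((n : ℝ) + 2 * p)) := by
          have h104 : 4 * R ≤ 104 * σ := by linarith
          gcongr
      _ = _ := by rw [Real.mul_rpow (by norm_num) hσ0.le]; ring

/-- The mean value bound defining `λ₀` in integrated form. -/
lemma integral_le_of_average_le {lam₀ : ℝ} (hp1 : 1 < p) (hR : 0 < R)
    (h₀ : 1 + (⨍ w in parCyl p 1 (4 * R) zhat, ‖u w‖ ^ p / (4 * R) ^ p) ^ (1 / p) ≤ lam₀)
    (hlam : lam₀ ≤ lam) :
    1 ≤ lam ∧ ∫ w in parCyl p 1 (4 * R) zhat, ‖u w‖ ^ p ≤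
      lam ^ p * (unitCylVol n * (4 * R) ^ ((n : ℝ) + 2 * p)) := by
  have hκ := unitCylVol_pos n
  have hR4 : 0 < 4 * R := by linarith
  rw [setAverage_eq, integral_div, smul_eq_mul, Measure.real, volume_parCyl_one hR4] at h₀
  set I := ∫ w in parCyl p 1 (4 * R) zhat, ‖u w‖ ^ p
  have hI : 0 ≤ I := integral_nonneg fun _ => by positivity
  set V := unitCylVol n * (4 * R) ^ ((n : ℝ) + p) with hV_def
  have hV : 0 < V := by positivity
  have hA : 0 ≤ V⁻¹ * (I / (4 * R) ^ p) := by positivity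
  have hA' := Real.rpow_nonneg hA (1 / p)
  refine ⟨by linarith, ?_⟩
  have hle : V⁻¹ * (I / (4 * R) ^ p) ≤ lam ^ p := by
    have := Real.rpow_le_rpow hA' (by linarith : _ ≤ lam) (by linarith : 0 ≤ p)
    rwa [← Real.rpow_mul hA, one_div_mul_cancel (by linarith), Real.rpow_one] at this
  rw [inv_mul_eq_div, div_div, div_le_iff₀ (by positivity)] at hle
  refine hle.trans_eq ?_
  rw [hV_def, show (n : ℝ) + 2 * p = p + (n + p) by ring, Real.rpow_add hR4 p]
  ring

end Scaling

/-- If two cylinders meet and their radii and scaling factors are comparable, then an enlargement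
of the second one contains the first one. -/
lemma parCyl_subset_of_inter {p C μ₁ μ₂ r s : ℝ} (hp1 : 1 ≤ p) (hC : 1 ≤ C) (hμ₁ : 0 < μ₁)
    (hμ₂ : 0 < μ₂) (hμ : μ₂ ≤ C * μ₁) (hr : 0 ≤ r) (hs : 0 ≤ s) (hrs : r ≤ 2 * s)
    {z₁ z₂ y : Spc n × ℝ} (hy₁ : y ∈ parCyl p μ₁ (4 * r) z₁) (hy₂ : y ∈ parCyl p μ₂ (4 * s) z₂) :
    parCyl p μ₁ (4 * r) z₁ ⊆ parCyl p μ₂ (20 * C * s) z₂ := by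
  have hsub : parCyl p μ₁ (4 * r) z₁ ⊆ parCyl p μ₂ (C * (4 * r)) z₁ :=
    (parCyl_subset_mul hp1 hμ₁ hC (by linarith) z₁).trans
      (parCyl_subset_of_scaling_le hμ₂ hμ (by positivity) z₁)
  intro w hw
  have h := mem_parCyl_trans hp1 hμ₂ (by positivity) (by positivity)
    (mem_parCyl_trans hp1 hμ₂ (by positivity) (by positivity) (hsub hw)
      (mem_parCyl_comm.1 (hsub hy₁))) hy₂
  refine parCyl_subset_of_radius_le (by linarith) hμ₂ (by positivity) ?_ z₂ h
  nlinarith [mul_le_mul_of_nonneg_left hrs (by linarith : 0 ≤ C),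
    mul_le_mul_of_nonneg_right hC hs]

/-- Vitali-type covering property for the intrinsic cylinders: let
`max{2n/(n+2), 1} < p < 2n/(n−2)₊`. There exists `ĉ = ĉ(n, p) ≥ 20` such that whenever
`λ ≥ λ₀` and `𝓕` is any collection of cylinders `Q_{4r}^{(μ_{z;r}^{(λ)})}(z)` with `z ∈ Q_{2R}`
and `r ∈ (0, R/ĉ]`, there is a countable subfamily `𝓖 ⊆ 𝓕` of pairwise disjoint cylinders with
`⋃_{Q ∈ 𝓕} Q ⊆ ⋃_{Q ∈ 𝓖} Q̂` where `Q̂ = Q_{ĉr}^{(μ_{z;r}^{(λ)})}(z)`. -/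
theorem vitali_covering (n : ℕ) (p : ℝ) (hn : 1 ≤ n)
    (hp : max (2 * (n : ℝ) / ((n : ℝ) + 2)) 1 < p)
    (hp' : (n : ℝ) ≤ 2 ∨ p < 2 * (n : ℝ) / ((n : ℝ) - 2)) :
    ∃ chat : ℝ, 20 ≤ chat ∧
      ∀ (N : ℕ) (T R : ℝ) (Ω : Set (Spc n)) (u : Spc n × ℝ → Vec N)
        (zhat : Spc n × ℝ) (lam₀ lam : ℝ),
        0 < T → IsOpen Ω → Bornology.IsBounded Ω → 0 < R →
        parCyl p 1 (4 * R) zhat ⊆ Ω ×ˢ Ioo 0 T →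
        Measurable u →
        MemLp u (ENNReal.ofReal p) (volume.restrict (Ω ×ˢ Ioo 0 T)) →
        1 + (⨍ w in parCyl p 1 (4 * R) zhat, ‖u w‖ ^ p / (4 * R) ^ p) ^ (1 / p) ≤ lam₀ →
        lam₀ ≤ lam →
        ∀ 𝓕 : Set ((Spc n × ℝ) × ℝ),
          (∀ zr ∈ 𝓕, zr.1 ∈ parCyl p 1 (2 * R) zhat ∧ zr.2 ∈ Ioc 0 (R / chat)) →
          ∃ 𝓖 ⊆ 𝓕, 𝓖.Countable ∧
            (𝓖.PairwiseDisjoint fun zr =>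
              parCyl p (muF p lam R u zr.1 zr.2) (4 * zr.2) zr.1) ∧
            (⋃ zr ∈ 𝓕, parCyl p (muF p lam R u zr.1 zr.2) (4 * zr.2) zr.1)
              ⊆ ⋃ zr ∈ 𝓖, parCyl p (muF p lam R u zr.1 zr.2) (chat * zr.2) zr.1 := by
  have hp1 : 1 < p := (le_max_right _ _).trans_lt hp
  have hq := sub_betaEx_pos hp1 hp'
  have hC := two_le_muRatio hp1 hq
  refine ⟨20 * muRatio n p, by linarith, ?_⟩
  intro N T R Ω u zhat lam₀ lam _ _ _ hR hQ _ hu h₀ hlam 𝓕 h𝓕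
  obtain ⟨hlam1, hI⟩ := integral_le_of_average_le hp1 hR h₀ hlam
  have hint : IntegrableOn (fun w => ‖u w‖ ^ p) (parCyl p 1 (4 * R) zhat) := by
    have h := hu.integrable_norm_rpow (by simpa using (by linarith : 0 < p)) ENNReal.ofReal_ne_top
    rw [ENNReal.toReal_ofReal (by linarith)] at h
    exact IntegrableOn.mono_set h hQ
  have hrad : ∀ zr ∈ 𝓕, zr.2 ≤ R := fun zr hzr =>
    (h𝓕 zr hzr).2.2.trans (div_le_self hR.le (by linarith))
  have hμ : ∀ zr ∈ 𝓕, 1 ≤ muF p lam R u zr.1 zr.2 := fun zr hzr =>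
    one_le_muF hp1 hq hlam1 hint (h𝓕 zr hzr).1 (h𝓕 zr hzr).2.1 (hrad zr hzr)
  have hne : ∀ zr ∈ 𝓕, (parCyl p (muF p lam R u zr.1 zr.2) (4 * zr.2) zr.1).Nonempty :=
    fun zr hzr => ⟨zr.1, mem_parCyl_self p (by linarith [hμ zr hzr])
      (by linarith [(h𝓕 zr hzr).2.1]) zr.1⟩
  obtain ⟨𝓖, h𝓖, hdisj, hcov⟩ := Vitali.exists_disjoint_subfamily_covering_enlargement
    (fun zr : (Spc n × ℝ) × ℝ => parCyl p (muF p lam R u zr.1 zr.2) (4 * zr.2) zr.1) 𝓕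
    (fun zr => zr.2) 2 one_lt_two (fun zr hzr => (h𝓕 zr hzr).2.1.le) R hrad hne
  refine ⟨𝓖, h𝓖, hdisj.countable_of_isOpen (fun _ _ => isOpen_parCyl _ _ _ _)
    fun zr hzr => hne zr (h𝓖 hzr), hdisj, iUnion₂_subset fun a ha => ?_⟩
  obtain ⟨b, hb, ⟨y, hya, hyb⟩, hab⟩ := hcov a ha
  have hb' := h𝓖 hb
  refine Subset.trans ?_ (subset_biUnion_of_mem hb)
  exact parCyl_subset_of_inter hp1.le (by linarith) (by linarith [hμ a ha]) (by linarith [hμ b hb'])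
    (muF_le_muRatio_mul hp1 hq hlam1 hR hint hI (h𝓕 a ha).1 (h𝓕 b hb').1 (h𝓕 a ha).2.1
      (hrad a ha) (h𝓕 b hb').2.1 (hrad b hb') hab hya hyb)
    (h𝓕 a ha).2.1.le (h𝓕 b hb').2.1.le hab hya hyb
end
end

section
/- Controlled growth of the scaling factors: Let max{2n/(n+2),1} < p < 2n/(n−2)_+ and let u, Q_{4R}, λ_o and the scaling factors μ_{z;ρ}^{(λ)} be as in the construction below. Then for every λ ≥ λ_o, every z_o ∈ Q_{2R} and all radii 0 < ρ < s ≤ R one has μ_{z_o;ρ}^{(λ)} ≤ (s/ρ)^{(n+2p)/(p−β)} μ_{z_o;s}^{(λ)}; in particular, taking s = R, μ_{z_o;ρ}^{(λ)} ≤ (4R/ρ)^{(n+2p)/(p−β)} for all ρ ∈ (0,R]. -/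
open MeasureTheory Set
open scoped ENNReal

noncomputable section

variable {n N : ℕ}

theorem betaEx_lt {n : ℕ} {p : ℝ} (hp : 1 < p)
    (hp' : (n : ℝ) ≤ 2 ∨ p < 2 * (n : ℝ) / ((n : ℝ) - 2)) : betaEx n p < p := by
  unfold betaEx
  rcases le_total p 2 with h | h
  · rw [max_eq_right h]
    linarith
  · rw [max_eq_left h]
    have hpos : 0 < p := by linarith
    have key : (n : ℝ) * (p - 2) < 2 * p := by
      rcases le_or_gt (n : ℝ) 2 with h2 | h2
      · nlinarith
      · have h3 := hp'.resolve_left (not_le.2 h2)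
        rw [lt_div_iff₀ (by linarith)] at h3
        linarith
    have key' : (n : ℝ) / p * (p - 2) < 2 := by
      rw [div_mul_eq_mul_div, div_lt_iff₀ hpos]
      exact key
    linarith

theorem parCyl_one {n : ℕ} (p ρ : ℝ) (z : Spc n × ℝ) :
    parCyl p 1 ρ z = Metric.ball z.1 ρ ×ˢ Ioo (z.2 - ρ ^ p) (z.2 + ρ ^ p) := by
  simp [parCyl]

/-- Cylinders shrink when the scaling parameter grows and when the radius decreases. -/
theorem parCyl_subset_parCyl {n : ℕ} {p m m' r s : ℝ} (hp : 1 < p) (hm : 0 < m) (hmm : m ≤ m')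
    (hr : 0 < r) (hrs : r ≤ s) (z : Spc n × ℝ) : parCyl p m' r z ⊆ parCyl p m s z := by
  have hpow : r ^ p ≤ s ^ p := Real.rpow_le_rpow hr.le hrs (by linarith)
  have hr' : 0 ≤ r ^ p := Real.rpow_nonneg hr.le p
  unfold parCyl
  split_ifs with h
  · have h1 : m' ^ (p - 2) * r ^ p ≤ m ^ (p - 2) * s ^ p :=
      mul_le_mul (Real.rpow_le_rpow_of_nonpos hm hmm (by linarith)) hpow hr'
        (Real.rpow_nonneg hm.le _)
    exact prod_mono (Metric.ball_subset_ball hrs) (Ioo_subset_Ioo (by linarith) (by linarith))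
  · have h1 : m' ^ ((2 - p) / p) * r ≤ m ^ ((2 - p) / p) * s :=
      mul_le_mul (Real.rpow_le_rpow_of_nonpos hm hmm
        (div_nonpos_of_nonpos_of_nonneg (by linarith) (by linarith))) hrs hr.le
        (Real.rpow_nonneg hm.le _)
    exact prod_mono (Metric.ball_subset_ball h1) (Ioo_subset_Ioo (by linarith) (by linarith))

theorem parCyl_one_subset_of_mem {n : ℕ} {p R : ℝ} (hp : 1 < p) (hR : 0 < R)
    {z zhat : Spc n × ℝ} (hz : z ∈ parCyl p 1 (2 * R) zhat) :
    parCyl p 1 R z ⊆ parCyl p 1 (4 * R) zhat := by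
  rw [parCyl_one] at hz ⊢
  rw [parCyl_one]
  obtain ⟨hz1, hz2, hz3⟩ := hz
  rw [Metric.mem_ball] at hz1
  have h1 : (2 * R) ^ p + R ^ p ≤ (2 * R + R) ^ p :=
    Real.add_rpow_le_rpow_add (by linarith) hR.le hp.le
  have h2 : (2 * R + R) ^ p ≤ (4 * R) ^ p :=
    Real.rpow_le_rpow (by linarith) (by linarith) (by linarith)
  exact prod_mono (Metric.ball_subset_ball' (by linarith))
    (Ioo_subset_Ioo (by linarith) (by linarith))

theorem exists_volume_parCyl_one (n : ℕ) : ∃ c : ℝ, 0 < c ∧ ∀ (p ρ : ℝ) (z : Spc n × ℝ), 0 < ρ →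
    (volume (parCyl p 1 ρ z)).toReal = c * (ρ ^ (n : ℝ) * ρ ^ p) := by
  refine ⟨2 * (volume (Metric.ball (0 : Spc n) 1)).toReal, ?_, fun p ρ z hρ ↦ ?_⟩
  · have := ENNReal.toReal_pos (Metric.measure_ball_pos volume (0 : Spc n) one_pos).ne'
      measure_ball_lt_top.ne
    positivity
  · have hρ' : 0 ≤ ρ ^ p := Real.rpow_nonneg hρ.le p
    rw [parCyl_one, Measure.volume_eq_prod, Measure.prod_prod, Measure.addHaar_ball_of_pos _ _ hρ,
      Real.volume_Ioo, ENNReal.toReal_mul, ENNReal.toReal_mul, ENNReal.toReal_ofReal (by positivity),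
      ENNReal.toReal_ofReal (by linarith), finrank_euclideanSpace_fin, Real.rpow_natCast]
    ring

theorem volume_parCyl_one_ratio {n : ℕ} {p r s : ℝ} (hr : 0 < r) (hs : 0 < s)
    (z z' : Spc n × ℝ) :
    s ^ p * (volume (parCyl p 1 s z')).toReal =
      (s / r) ^ ((n : ℝ) + 2 * p) * (r ^ p * (volume (parCyl p 1 r z)).toReal) := by
  obtain ⟨c, -, hc⟩ := exists_volume_parCyl_one n
  have hr' : r ^ (n : ℝ) ≠ 0 := (Real.rpow_pos_of_pos hr _).ne'
  have hr'' : r ^ p ≠ 0 := (Real.rpow_pos_of_pos hr _).ne'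
  rw [hc p s z' hs, hc p r z hr, Real.rpow_add (div_pos hs hr), two_mul p,
    Real.rpow_add (div_pos hs hr), Real.div_rpow hs.le hr.le, Real.div_rpow hs.le hr.le]
  field_simp

theorem volume_parCyl_one_pos {n : ℕ} (p : ℝ) {r : ℝ} (hr : 0 < r) (z : Spc n × ℝ) :
    0 < (volume (parCyl p 1 r z)).toReal := by
  obtain ⟨c, hc0, hc⟩ := exists_volume_parCyl_one n
  rw [hc p r z hr]
  have := Real.rpow_pos_of_pos hr (n : ℝ)
  have := Real.rpow_pos_of_pos hr p
  positivity

/-- The admissible parameters in the infimum defining `mutilde`. -/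
def admissibleScales {n N : ℕ} (p lam : ℝ) (u : Spc n × ℝ → Vec N) (z : Spc n × ℝ) (ρ : ℝ) :
    Set ℝ :=
  {μ : ℝ | 1 ≤ μ ∧
    (∫ w in parCyl p μ ρ z, ‖u w‖ ^ p / ρ ^ p) / (volume (parCyl p 1 ρ z)).toReal
      ≤ μ ^ (p - betaEx n p) * lam ^ p}

/-- Admissibility passes to smaller cylinders at the cost of a power of the ratio of radii. -/
theorem mul_mem_admissibleScales {n N : ℕ} {p lam : ℝ} {u : Spc n × ℝ → Vec N}
    {z z' : Spc n × ℝ} {r s m : ℝ} (hp : 1 < p) (hβ : betaEx n p < p) (hr : 0 < r) (hrs : r ≤ s)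
    (hsub : parCyl p ((s / r) ^ (((n : ℝ) + 2 * p) / (p - betaEx n p)) * m) r z ⊆ parCyl p m s z')
    (hint : IntegrableOn (fun w ↦ ‖u w‖ ^ p) (parCyl p m s z'))
    (hm : m ∈ admissibleScales p lam u z' s) :
    (s / r) ^ (((n : ℝ) + 2 * p) / (p - betaEx n p)) * m ∈ admissibleScales p lam u z r := by
  obtain ⟨hm1, hm2⟩ := hm
  have hs : 0 < s := hr.trans_le hrs
  have hd : 0 < p - betaEx n p := sub_pos.2 hβ
  have hq : 1 ≤ s / r := (one_le_div hr).2 hrs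
  have hq0 : 0 < s / r := div_pos hs hr
  have he : 0 ≤ ((n : ℝ) + 2 * p) / (p - betaEx n p) := by
    have : (0 : ℝ) ≤ n := n.cast_nonneg
    exact div_nonneg (by linarith) hd.le
  refine ⟨one_le_mul_of_one_le_of_one_le (Real.one_le_rpow hq he) hm1, ?_⟩
  have hrp : 0 < r ^ p := Real.rpow_pos_of_pos hr _
  have hsp : 0 < s ^ p := Real.rpow_pos_of_pos hs _
  have hVr := volume_parCyl_one_pos p hr z
  have hVs := volume_parCyl_one_pos p hs z'
  have hmono := setIntegral_mono_set hint
    (Filter.Eventually.of_forall fun w ↦ Real.rpow_nonneg (norm_nonneg (u w)) p) hsub.eventuallyLE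
  rw [integral_div, div_div, div_le_iff₀ (by positivity)] at hm2 ⊢
  rw [Real.mul_rpow (Real.rpow_nonneg hq0.le _) (by linarith), ← Real.rpow_mul hq0.le,
    div_mul_cancel₀ _ hd.ne']
  refine hmono.trans (hm2.trans (le_of_eq ?_))
  rw [volume_parCyl_one_ratio hr hs z z']
  ring

theorem mutilde_le_of_mem {n N : ℕ} {p lam : ℝ} {u : Spc n × ℝ → Vec N} {z : Spc n × ℝ}
    {ρ m : ℝ} (hm : m ∈ admissibleScales p lam u z ρ) : mutilde p lam u z ρ ≤ m :=
  csInf_le ⟨1, fun _ h ↦ h.1⟩ hm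

theorem mutilde_nonneg {n N : ℕ} (p lam : ℝ) (u : Spc n × ℝ → Vec N) (z : Spc n × ℝ) (ρ : ℝ) :
    0 ≤ mutilde p lam u z ρ :=
  Real.sInf_nonneg fun _ h ↦ zero_le_one.trans h.1

/-- If the mean of `|u|^p / s^p` is controlled by `lam`, then `1` is an admissible scale. -/
theorem one_mem_admissibleScales {n N : ℕ} {p lam : ℝ} {u : Spc n × ℝ → Vec N} {z : Spc n × ℝ}
    {s : ℝ} (hp : 1 < p) (hs : 0 < s)
    (hlam : 1 + (⨍ w in parCyl p 1 s z, ‖u w‖ ^ p / s ^ p) ^ (1 / p) ≤ lam) :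
    1 ∈ admissibleScales p lam u z s := by
  refine ⟨le_rfl, ?_⟩
  have hp0 : 0 < p := by linarith
  rw [setAverage_eq, smul_eq_mul, Measure.real, inv_mul_eq_div] at hlam
  have hA : 0 ≤ (∫ w in parCyl p 1 s z, ‖u w‖ ^ p / s ^ p) / (volume (parCyl p 1 s z)).toReal :=
    div_nonneg (integral_nonneg fun w ↦ by positivity) ENNReal.toReal_nonneg
  rw [Real.one_rpow, one_mul]
  generalize (∫ w in parCyl p 1 s z, ‖u w‖ ^ p / s ^ p) / (volume (parCyl p 1 s z)).toReal = A
    at hA hlam ⊢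
  calc A = (A ^ (1 / p)) ^ p := by
        rw [← Real.rpow_mul hA, one_div_mul_cancel hp0.ne', Real.rpow_one]
    _ ≤ lam ^ p := Real.rpow_le_rpow (Real.rpow_nonneg hA _) (by linarith) hp0.le

/-- Controlled growth of the scaling factors: let `max{2n/(n+2), 1} < p < 2n/(n−2)₊`. Then
for every `λ ≥ λ₀`, every `z₀ ∈ Q_{2R}` and all radii `0 < ρ < s ≤ R` one has
`μ_{z₀;ρ}^{(λ)} ≤ (s/ρ)^{(n+2p)/(p−β)} μ_{z₀;s}^{(λ)}`; in particular
`μ_{z₀;ρ}^{(λ)} ≤ (4R/ρ)^{(n+2p)/(p−β)}` for all `ρ ∈ (0, R]`. -/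
theorem scaling_factor_growth (n : ℕ) (p : ℝ) (hn : 1 ≤ n)
    (hp : max (2 * (n : ℝ) / ((n : ℝ) + 2)) 1 < p)
    (hp' : (n : ℝ) ≤ 2 ∨ p < 2 * (n : ℝ) / ((n : ℝ) - 2)) :
    ∀ (N : ℕ) (T R : ℝ) (Ω : Set (Spc n)) (u : Spc n × ℝ → Vec N)
      (zhat : Spc n × ℝ) (lam₀ lam : ℝ),
      0 < T → IsOpen Ω → Bornology.IsBounded Ω → 0 < R →
      parCyl p 1 (4 * R) zhat ⊆ Ω ×ˢ Ioo 0 T →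
      Measurable u →
      MemLp u (ENNReal.ofReal p) (volume.restrict (Ω ×ˢ Ioo 0 T)) →
      1 + (⨍ w in parCyl p 1 (4 * R) zhat, ‖u w‖ ^ p / (4 * R) ^ p) ^ (1 / p) ≤ lam₀ →
      lam₀ ≤ lam →
      ∀ z₀ ∈ parCyl p 1 (2 * R) zhat,
        (∀ ρ s : ℝ, 0 < ρ → ρ < s → s ≤ R →
          muF p lam R u z₀ ρ
            ≤ (s / ρ) ^ (((n : ℝ) + 2 * p) / (p - betaEx n p)) * muF p lam R u z₀ s) ∧
        (∀ ρ ∈ Ioc (0 : ℝ) R,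
          muF p lam R u z₀ ρ ≤ (4 * R / ρ) ^ (((n : ℝ) + 2 * p) / (p - betaEx n p))) := by
  have hp1 : 1 < p := (le_max_right _ _).trans_lt hp
  have hβ := betaEx_lt hp1 hp'
  have he : 0 ≤ ((n : ℝ) + 2 * p) / (p - betaEx n p) :=
    div_nonneg (by positivity) (sub_nonneg.2 hβ.le)
  intro N T R Ω u zhat lam₀ lam _ _ _ hR hQ _ hLp hlam₀ hlam z₀ hz₀
  set e := ((n : ℝ) + 2 * p) / (p - betaEx n p) with he_def
  have hint : IntegrableOn (fun w ↦ ‖u w‖ ^ p) (parCyl p 1 (4 * R) zhat) := by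
    have h := hLp.integrable_norm_rpow (by simpa using by linarith) ENNReal.ofReal_ne_top
    rw [ENNReal.toReal_ofReal (by linarith)] at h
    exact IntegrableOn.mono_set h hQ
  have hsub : ∀ r m : ℝ, 0 < r → r ≤ R → 1 ≤ m →
      parCyl p m r z₀ ⊆ parCyl p 1 (4 * R) zhat := fun r m hr hrR hm ↦
    (parCyl_subset_parCyl hp1 one_pos hm hr hrR z₀).trans (parCyl_one_subset_of_mem hp1 hR hz₀)
  have hone := one_mem_admissibleScales hp1 (by positivity) (hlam₀.trans hlam)
  have hmem : ∀ r, 0 < r → r ≤ R → (4 * R / r) ^ e ∈ admissibleScales p lam u z₀ r := by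
    intro r hr hrR
    have h1 : 1 ≤ (4 * R / r) ^ e := Real.one_le_rpow ((one_le_div hr).2 (by linarith)) he
    have h := mul_mem_admissibleScales hp1 hβ hr (by linarith)
      (by rw [← he_def, mul_one]; exact hsub r _ hr hrR h1) hint hone
    rwa [mul_one] at h
  have hbound : ∀ ρ, 0 < ρ → ∀ r ∈ Icc ρ R, mutilde p lam u z₀ r ≤ (4 * R / ρ) ^ e := by
    intro ρ hρ r hr
    have hr0 : 0 < r := hρ.trans_le hr.1
    refine (mutilde_le_of_mem (hmem r hr0 hr.2)).trans ?_
    have := hr.1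
    gcongr
  have hle : ∀ s r, 0 < s → r ∈ Icc s R → mutilde p lam u z₀ r ≤ muF p lam R u z₀ s :=
    fun s r hs hr ↦ le_csSup ⟨_, forall_mem_image.2 (hbound s hs)⟩ (mem_image_of_mem _ hr)
  refine ⟨fun ρ s hρ hρs hsR ↦ ?_, fun ρ hρ ↦ ?_⟩
  · have hs : 0 < s := hρ.trans hρs
    have hF0 : 0 ≤ muF p lam R u z₀ s :=
      (mutilde_nonneg p lam u z₀ s).trans (hle s s hs ⟨le_rfl, hsR⟩)
    refine csSup_le ((nonempty_Icc.2 (hρs.le.trans hsR)).image _) (forall_mem_image.2 ?_)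
    intro r hr
    have hr0 : 0 < r := hρ.trans_le hr.1
    rcases le_total s r with hsr | hrs
    · exact (hle s r hs ⟨hsr, hr.2⟩).trans
        (le_mul_of_one_le_left hF0 (Real.one_le_rpow ((one_le_div hρ).2 hρs.le) he))
    · have hq : 0 < (s / r) ^ e := Real.rpow_pos_of_pos (div_pos hs hr0) _
      have hq1 : 1 ≤ (s / r) ^ e := Real.one_le_rpow ((one_le_div hr0).2 hrs) he
      have hstep : mutilde p lam u z₀ r ≤ (s / r) ^ e * mutilde p lam u z₀ s := by
        rw [← div_le_iff₀' hq]
        refine le_csInf ⟨_, hmem s hs hsR⟩ fun m hm ↦ ?_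
        rw [div_le_iff₀' hq]
        have hm0 : 0 < m := one_pos.trans_le hm.1
        exact mutilde_le_of_mem (mul_mem_admissibleScales hp1 hβ hr0 hrs
          (parCyl_subset_parCyl hp1 hm0 (le_mul_of_one_le_left hm0.le hq1) hr0 hrs z₀)
          (hint.mono_set (hsub s m hs hsR hm.1)) hm)
      refine hstep.trans (mul_le_mul ?_ (hle s s hs ⟨le_rfl, hsR⟩) (mutilde_nonneg _ _ _ _ _)
        (Real.rpow_nonneg (div_pos hs hρ).le _))
      have := hr.1
      gcongr
  · exact csSup_le ((nonempty_Icc.2 hρ.2).image _) (forall_mem_image.2 (hbound ρ hρ.1))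
end
end
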